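/- There exist a constant c > 0 and a threshold d₀ ∈ ℕ such that for every dimension d ≥ d₀, every δ ∈ [0,1], and every M-bit memory-constrained deterministic algorithm that, using T queries, is guaranteed to solve the feasibility problem over the unit ball of ℝ^d with accuracy ε = 1/(48 d² √d), one has: either M ≥ d^{2−δ} or T ≥ c · d^{1+δ} / (log d)³. -/

import Mathlib

open scoped RealInnerProductSpace

/-- An `M`-bit memory-constrained deterministic algorithm interacting with an oracle
with query space `S` and response space `R`: a query function and an update function. -/
structure MemAlg (M : ℕ) (S R : Type) where
  query : (Fin M → Bool) → S
  update : (Fin M → Bool) → S → R → (Fin M → Bool)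

namespace MemAlg

variable {M : ℕ} {S R : Type}

/-- The memory state after `t` iterations, interacting with the oracle `O`;
the initial memory state is `0^M`. -/
def mem (alg : MemAlg M S R) (O : S → R) : ℕ → (Fin M → Bool)
  | 0 => fun _ => false
  | t + 1 =>
      alg.update (alg.mem O t) (alg.query (alg.mem O t)) (O (alg.query (alg.mem O t)))

/-- The output of the algorithm after `T` queries: its last query
`q_T = ψ_query (Memory_{T-1})`. -/
def output (alg : MemAlg M S R) (O : S → R) (T : ℕ) : S :=
  alg.query (alg.mem O (T - 1))

end MemAlg

/-- `O` is a separation oracle for the set `Q`: for each query `x` it either returns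
`none` (the symbol `Success`), which is only allowed when `x ∈ Q`, or a vector `g`
separating `x` from `Q`, i.e. `⟪g, x - x'⟫ > 0` for all `x' ∈ Q`. -/
def IsSeparationOracle {d : ℕ} (Q : Set (EuclideanSpace ℝ (Fin d)))
    (O : EuclideanSpace ℝ (Fin d) → Option (EuclideanSpace ℝ (Fin d))) : Prop :=
  ∀ x, (O x = none → x ∈ Q) ∧
    ∀ g, O x = some g → ∀ x' ∈ Q, 0 < ⟪g, x - x'⟫

/-- The algorithm `alg`, using `T` queries, is guaranteed to solve the feasibility problem
over the unit ball of `ℝ^d` with accuracy `ε`: for every convex set `Q ⊆ B_d(0,1)`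
containing a ball of radius `ε` centered at some point of the unit ball, and every
separation oracle for `Q`, the output lies in `Q`. -/
def SolvesFeasibility {M : ℕ} (d : ℕ)
    (alg : MemAlg M (EuclideanSpace ℝ (Fin d)) (Option (EuclideanSpace ℝ (Fin d))))
    (T : ℕ) (ε : ℝ) : Prop :=
  ∀ Q : Set (EuclideanSpace ℝ (Fin d)),
    Convex ℝ Q → Q ⊆ Metric.closedBall (0 : EuclideanSpace ℝ (Fin d)) 1 →
    (∃ xstar ∈ Metric.closedBall (0 : EuclideanSpace ℝ (Fin d)) 1,
        Metric.closedBall xstar ε ⊆ Q) →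
    ∀ O : EuclideanSpace ℝ (Fin d) → Option (EuclideanSpace ℝ (Fin d)),
      IsSeparationOracle Q O → alg.output O T ∈ Q


/-! ### Lower bound construction -/

section Construction

variable {d : ℕ}

/-- The `r`-th constraint is violated at `x`. -/
def violC (n : ℕ) (η σ : ℝ) (a v : ℕ → EuclideanSpace ℝ (Fin d)) (r : ℕ)
    (x : EuclideanSpace ℝ (Fin d)) : Prop :=
  if r = 0 then 1 < ‖x‖ else if r ≤ n then η < |⟪a (r - 1), x⟫| else -σ < ⟪v (r - n - 1), x⟫

/-- The separating vector associated with the `r`-th constraint. -/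
noncomputable def respC (n : ℕ) (a v : ℕ → EuclideanSpace ℝ (Fin d)) (r : ℕ)
    (x : EuclideanSpace ℝ (Fin d)) : EuclideanSpace ℝ (Fin d) :=
  if r = 0 then x else if r ≤ n then ⟪a (r - 1), x⟫ • a (r - 1) else v (r - n - 1)

open Classical in
/-- First violated constraint among the first `J`, or `J`. -/
noncomputable def ptrC (n : ℕ) (η σ : ℝ) (a v : ℕ → EuclideanSpace ℝ (Fin d)) (J : ℕ)
    (x : EuclideanSpace ℝ (Fin d)) : ℕ :=
  if h : ∃ r, r < J ∧ violC n η σ a v r x then Nat.find h else J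

/-- The oracle. -/
noncomputable def oracC (n : ℕ) (η σ : ℝ) (a v : ℕ → EuclideanSpace ℝ (Fin d)) (J : ℕ)
    (x : EuclideanSpace ℝ (Fin d)) : Option (EuclideanSpace ℝ (Fin d)) :=
  if ptrC n η σ a v J x < J then some (respC n a v (ptrC n η σ a v J x) x) else none

/-- The feasible set. -/
def setC (n : ℕ) (η σ : ℝ) (a v : ℕ → EuclideanSpace ℝ (Fin d)) (J : ℕ) :
    Set (EuclideanSpace ℝ (Fin d)) := {x | ∀ r < J, ¬ violC n η σ a v r x}

variable {n : ℕ} {η σ : ℝ} {a v : ℕ → EuclideanSpace ℝ (Fin d)} {J : ℕ}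

open Classical in
lemma ptrC_le (x : EuclideanSpace ℝ (Fin d)) : ptrC n η σ a v J x ≤ J := by
  unfold ptrC
  split_ifs with h
  · exact (Nat.find_spec h).1.le
  · exact le_rfl

open Classical in
lemma ptrC_spec {x : EuclideanSpace ℝ (Fin d)} (h : ptrC n η σ a v J x < J) :
    violC n η σ a v (ptrC n η σ a v J x) x := by
  unfold ptrC at h ⊢
  split_ifs at h ⊢ with h1
  · exact (Nat.find_spec h1).2
  · omega

open Classical in
lemma ptrC_min {x : EuclideanSpace ℝ (Fin d)} {r : ℕ} (hr : r < ptrC n η σ a v J x) :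
    ¬ violC n η σ a v r x := by
  intro hv
  have hJ := ptrC_le (n := n) (η := η) (σ := σ) (a := a) (v := v) (J := J) x
  have h1 : ∃ r, r < J ∧ violC n η σ a v r x := ⟨r, lt_of_lt_of_le hr hJ, hv⟩
  unfold ptrC at hr
  rw [dif_pos h1] at hr
  exact Nat.find_min h1 hr ⟨by have := (Nat.find_spec h1).1; omega, hv⟩

lemma ptrC_lt_iff {x : EuclideanSpace ℝ (Fin d)} :
    ptrC n η σ a v J x < J ↔ ∃ r < J, violC n η σ a v r x := by
  constructor
  · intro h
    exact ⟨_, h, ptrC_spec h⟩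
  · rintro ⟨r, hr, hv⟩
    by_contra h
    exact ptrC_min (lt_of_lt_of_le hr (not_lt.mp h)) hv

lemma ptrC_eq {x : EuclideanSpace ℝ (Fin d)} {r : ℕ} (hr : r < J) (hv : violC n η σ a v r x)
    (hm : ∀ r' < r, ¬ violC n η σ a v r' x) : ptrC n η σ a v J x = r := by
  have h1 : ptrC n η σ a v J x < J := ptrC_lt_iff.mpr ⟨r, hr, hv⟩
  rcases lt_trichotomy (ptrC n η σ a v J x) r with h | h | h
  · exact absurd (ptrC_spec h1) (hm _ h)
  · exact h
  · exact absurd hv (ptrC_min h)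

lemma oracC_eq_none {x : EuclideanSpace ℝ (Fin d)} :
    oracC n η σ a v J x = none ↔ x ∈ setC n η σ a v J := by
  unfold oracC setC
  rw [Set.mem_ofPred_eq]
  by_cases h : ptrC n η σ a v J x < J
  · simp only [h, if_true]
    obtain ⟨r, hr, hv⟩ := ptrC_lt_iff.mp h
    constructor
    · intro h; cases h
    · intro h; exact absurd hv (h r hr)
  · simp only [h, if_false]
    rw [ptrC_lt_iff] at h
    push Not at h
    simpa using h

lemma sep_respC (hη : 0 ≤ η) {r : ℕ} {x y : EuclideanSpace ℝ (Fin d)}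
    (hx : violC n η σ a v r x) (hy : ¬ violC n η σ a v r y) :
    0 < ⟪respC n a v r x, x - y⟫ := by
  unfold violC at hx hy
  unfold respC
  split_ifs at hx hy ⊢ with h0 h1
  · rw [inner_sub_right, real_inner_self_eq_norm_sq]
    have := real_inner_le_norm x y
    nlinarith [norm_nonneg x, norm_nonneg y]
  · rw [real_inner_smul_left, inner_sub_right]
    set p := ⟪a (r - 1), x⟫
    set q := ⟪a (r - 1), y⟫
    have h2 : |q| < |p| := lt_of_le_of_lt (not_lt.mp hy) hx
    have h3 : p * q ≤ |p| * |q| := by rw [← abs_mul]; exact le_abs_self _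
    have h4 : p * p = |p| * |p| := (abs_mul_abs_self p).symm
    nlinarith [abs_nonneg p, abs_nonneg q]
  · rw [inner_sub_right]
    linarith

lemma isSep_oracC (hη : 0 ≤ η) :
    IsSeparationOracle (setC n η σ a v J) (oracC n η σ a v J) := by
  intro x
  refine ⟨fun h => oracC_eq_none.mp h, ?_⟩
  intro g hg y hy
  unfold oracC at hg
  split_ifs at hg with h
  cases hg
  exact sep_respC hη (ptrC_spec h) (hy _ h)

lemma convex_setC : Convex ℝ (setC n η σ a v J) := by
  have : setC n η σ a v J = ⋂ r, ⋂ (_ : r < J), {x | ¬ violC n η σ a v r x} := by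
    ext x; simp [setC]
  rw [this]
  refine convex_iInter fun r => convex_iInter fun _ => ?_
  unfold violC
  split_ifs with h0 h1
  · have : {x : EuclideanSpace ℝ (Fin d) | ¬ 1 < ‖x‖} = Metric.closedBall 0 1 := by
      ext x; simp
    rw [this]; exact convex_closedBall _ _
  · intro x hx y hy s t hs ht hst
    simp only [Set.mem_ofPred_eq, not_lt] at *
    rw [inner_add_right, real_inner_smul_right, real_inner_smul_right]
    rw [abs_le] at *
    constructor <;> nlinarith
  · intro x hx y hy s t hs ht hst
    simp only [Set.mem_ofPred_eq, not_lt] at *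
    rw [inner_add_right, real_inner_smul_right, real_inner_smul_right]
    have h1 := mul_le_mul_of_nonneg_left hx hs
    have h2 := mul_le_mul_of_nonneg_left hy ht
    have h3 : s * -σ + t * -σ = -σ := by rw [← add_mul, hst, one_mul]
    linarith

lemma setC_subset (hJ : 0 < J) : setC n η σ a v J ⊆ Metric.closedBall 0 1 := by
  intro x hx
  have := hx 0 hJ
  simpa [violC] using this

/-- constraints do not depend on later vectors -/
lemma violC_congr {v' : ℕ → EuclideanSpace ℝ (Fin d)} {j r : ℕ} (hv : ∀ i < j, v i = v' i)
    (hr : r < n + 1 + j) (x : EuclideanSpace ℝ (Fin d)) :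
    violC n η σ a v r x ↔ violC n η σ a v' r x := by
  unfold violC
  split_ifs with h0 h1
  · rfl
  · rfl
  · rw [hv _ (by omega)]

lemma oracC_congr {v' : ℕ → EuclideanSpace ℝ (Fin d)} {j J' : ℕ} (hv : ∀ i < j, v i = v' i)
    (hJ : n + 1 + j ≤ J) (hJ' : n + 1 + j ≤ J')
    {x : EuclideanSpace ℝ (Fin d)} (hx : ∃ r < n + 1 + j, violC n η σ a v r x) :
    oracC n η σ a v J x = oracC n η σ a v' J' x := by
  obtain ⟨r, hr, hvr⟩ := hx
  set p := ptrC n η σ a v J x with hp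
  have h1 : p < J := ptrC_lt_iff.mpr ⟨r, by omega, hvr⟩
  have h2 : p ≤ r := by
    by_contra h; exact ptrC_min (not_le.mp h) hvr
  have h3 : ptrC n η σ a v' J' x = p := by
    apply ptrC_eq (by omega)
    · rw [← violC_congr hv (by omega)]; exact ptrC_spec h1
    · intro r' hr'
      rw [← violC_congr hv (by omega)]
      exact ptrC_min hr'
  unfold oracC
  rw [← hp, h3, if_pos h1, if_pos (by omega)]
  congr 1
  unfold respC
  split_ifs with h0 h1
  · rfl
  · rfl
  · rw [hv _ (by omega)]

end Construction

section Geometry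

variable {d : ℕ}

lemma inner_eq_sumC (x y : EuclideanSpace ℝ (Fin d)) : ⟪x, y⟫ = ∑ c, x c * y c := by
  simp [PiLp.inner_apply, mul_comm]

lemma norm_sq_eq_sumC (x : EuclideanSpace ℝ (Fin d)) : ‖x‖ ^ 2 = ∑ c, x c ^ 2 := by
  rw [← real_inner_self_eq_norm_sq, inner_eq_sumC]
  simp [sq]

/-- A unit vector supported in a block of coordinates, orthogonal to few vectors. -/
lemma exists_unitC (A len : ℕ) (hA : A + len ≤ d) (S : Finset (EuclideanSpace ℝ (Fin d)))
    (hS : S.card < len) :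
    ∃ v : EuclideanSpace ℝ (Fin d), ‖v‖ = 1 ∧
      (∀ c : Fin d, v c ≠ 0 → A ≤ (c : ℕ) ∧ (c : ℕ) < A + len) ∧ ∀ x ∈ S, ⟪v, x⟫ = 0 := by
  let emb : (Fin len → ℝ) →ₗ[ℝ] EuclideanSpace ℝ (Fin d) :=
    { toFun := fun f => WithLp.toLp 2 fun c =>
        if h : A ≤ (c : ℕ) ∧ (c : ℕ) < A + len then f ⟨c - A, by omega⟩ else 0
      map_add' := by
        intro f g; ext c; simp only [PiLp.add_apply]; split_ifs <;> simp
      map_smul' := by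
        intro r f; ext c; simp only [PiLp.smul_apply]; split_ifs <;> simp }
  let φ : (Fin len → ℝ) →ₗ[ℝ] (S → ℝ) :=
    LinearMap.pi fun x => (innerₗ (EuclideanSpace ℝ (Fin d)) (x : EuclideanSpace ℝ (Fin d))) ∘ₗ emb
  have hker : LinearMap.ker φ ≠ ⊥ := by
    apply LinearMap.ker_ne_bot_of_finrank_lt
    simp
    exact hS
  obtain ⟨f, hf, hf0⟩ := (Submodule.ne_bot_iff _).mp hker
  have hw : emb f ≠ 0 := by
    intro h
    apply hf0
    ext e
    have := congrArg (fun y : EuclideanSpace ℝ (Fin d) => y ⟨A + e, by omega⟩) h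
    simpa [emb] using this
  refine ⟨(‖emb f‖⁻¹ : ℝ) • emb f, ?_, ?_, ?_⟩
  · rw [norm_smul, norm_inv, norm_norm, inv_mul_cancel₀ (norm_ne_zero_iff.mpr hw)]
  · intro c hc
    by_contra h
    apply hc
    simp [emb, h]
  · intro x hx
    have := congrFun (LinearMap.mem_ker.mp hf) ⟨x, hx⟩
    have h2 : ⟪x, emb f⟫ = 0 := by simpa [φ] using this
    rw [real_inner_smul_left, real_inner_comm, h2, mul_zero]

/-- A row of the hidden matrix. -/
noncomputable def rowC (N B : ℕ) (b : Fin d → ℕ) (i : ℕ) : EuclideanSpace ℝ (Fin d) :=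
  WithLp.toLp 2 fun c => if (c : ℕ) < 2 * N then (b c : ℝ) / B
    else if (c : ℕ) = 2 * N + i then (d : ℝ) else 0

lemma norm_rowC {N B : ℕ} {b : Fin d → ℕ} (hb : ∀ c, b c < B) (i : ℕ) (hd : 1 ≤ d) :
    ‖rowC N B b i‖ ≤ 2 * d := by
  have hd' : (1 : ℝ) ≤ d := by exact_mod_cast hd
  apply le_of_sq_le_sq _ (by positivity)
  rw [norm_sq_eq_sumC]
  calc ∑ c, (rowC N B b i) c ^ 2
      ≤ ∑ c : Fin d, ((1 : ℝ) + if (c : ℕ) = 2 * N + i then (d : ℝ) ^ 2 else 0) := by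
        apply Finset.sum_le_sum
        intro c _
        simp only [rowC]
        split_ifs with h1 h2
        · have hB : (0 : ℝ) < B := by exact_mod_cast (Nat.zero_le _).trans_lt (hb c)
          have h3 : (b c : ℝ) / B ≤ 1 := by
            rw [div_le_one hB]; exact_mod_cast (hb c).le
          have h4 : 0 ≤ (b c : ℝ) / B := by positivity
          nlinarith [sq_nonneg (d : ℝ)]
        · have hB : (0 : ℝ) < B := by exact_mod_cast (Nat.zero_le _).trans_lt (hb c)
          have h3 : (b c : ℝ) / B ≤ 1 := by
            rw [div_le_one hB]; exact_mod_cast (hb c).le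
          have h4 : 0 ≤ (b c : ℝ) / B := by positivity
          nlinarith
        · nlinarith
        · norm_num
    _ ≤ d + d ^ 2 := by
        rw [Finset.sum_add_distrib]
        simp only [Finset.sum_const, Finset.card_univ, Fintype.card_fin, nsmul_eq_mul, mul_one]
        gcongr
        rw [← Finset.sum_filter, Finset.sum_const, nsmul_eq_mul]
        have : (Finset.univ.filter fun c : Fin d => (c : ℕ) = 2 * N + i).card ≤ 1 := by
          rw [Finset.card_le_one]
          intro x hx y hy
          simp at hx hy
          exact Fin.ext (hx.trans hy.symm)
        have h2 : ((Finset.univ.filter fun c : Fin d => (c : ℕ) = 2 * N + i).card : ℝ) ≤ 1 := by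
          exact_mod_cast this
        nlinarith [sq_nonneg (d : ℝ)]
    _ ≤ (2 * d) ^ 2 := by nlinarith

/-- Completing a vector in the first coordinates to a vector orthogonal to all rows. -/
lemma exists_xstarC {N B n : ℕ} {b : ℕ → Fin d → ℕ} (hb : ∀ i < n, ∀ c, b i c < B)
    (hN : 2 * N + n ≤ d) (hd : 1 ≤ d) (u : EuclideanSpace ℝ (Fin d))
    (hu : ∀ c : Fin d, u c ≠ 0 → (c : ℕ) < 2 * N) (hu1 : ‖u‖ ≤ 1 / 4) :
    ∃ x : EuclideanSpace ℝ (Fin d), ‖x‖ ≤ 1 / 2 ∧ (∀ i < n, ⟪rowC N B (b i) i, x⟫ = 0) ∧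
      ∀ w : EuclideanSpace ℝ (Fin d), (∀ c : Fin d, w c ≠ 0 → (c : ℕ) < 2 * N) →
        ⟪w, x⟫ = ⟪w, u⟫ := by
  have hd' : (1 : ℝ) ≤ d := by exact_mod_cast hd
  let S : ℕ → ℝ := fun i => ∑ c : Fin d, (if (c : ℕ) < 2 * N then (b i c : ℝ) / B else 0) * u c
  have hS : ∀ i < n, S i ^ 2 ≤ d * ‖u‖ ^ 2 := by
    intro i hi
    refine (Finset.sum_mul_sq_le_sq_mul_sq _ _ _).trans ?_
    rw [← norm_sq_eq_sumC]
    gcongr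
    calc _ ≤ ∑ c : Fin d, (1 : ℝ) := by
          apply Finset.sum_le_sum
          intro c _
          split_ifs with h1
          · have hB : (0 : ℝ) < B := by exact_mod_cast (Nat.zero_le _).trans_lt (hb i hi c)
            have h3 : (b i c : ℝ) / B ≤ 1 := by
              rw [div_le_one hB]; exact_mod_cast (hb i hi c).le
            have h4 : 0 ≤ (b i c : ℝ) / B := by positivity
            nlinarith
          · norm_num
      _ = d := by simp
  let x : EuclideanSpace ℝ (Fin d) := WithLp.toLp 2 fun c =>
    if (c : ℕ) < 2 * N then u c else if (c : ℕ) < 2 * N + n then -(S (c - 2 * N)) / d else 0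
  refine ⟨x, ?_, ?_, ?_⟩
  · apply le_of_sq_le_sq _ (by positivity)
    rw [norm_sq_eq_sumC]
    calc ∑ c, x c ^ 2 ≤ ∑ c : Fin d, (u c ^ 2 + ‖u‖ ^ 2 / d) := by
          apply Finset.sum_le_sum
          intro c _
          simp only [x]
          split_ifs with h1 h2
          · have : 0 ≤ ‖u‖ ^ 2 / d := by positivity
            linarith
          · have h3 := hS (c - 2 * N) (by omega)
            have h4 : (-(S (c - 2 * N)) / d) ^ 2 ≤ ‖u‖ ^ 2 / d := by
              rw [div_pow, neg_sq, div_le_div_iff₀ (by positivity) (by positivity)]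
              nlinarith
            nlinarith [sq_nonneg (u c)]
          · rw [zero_pow two_ne_zero]
            exact add_nonneg (sq_nonneg _) (by positivity)
      _ = 2 * ‖u‖ ^ 2 := by
          rw [Finset.sum_add_distrib, ← norm_sq_eq_sumC]
          simp
          field_simp
          ring
      _ ≤ (1 / 2) ^ 2 := by nlinarith [norm_nonneg u]
  · intro i hi
    rw [inner_eq_sumC]
    have h1 : ∀ c : Fin d, rowC N B (b i) i c * x c =
        (if (c : ℕ) < 2 * N then (b i c : ℝ) / B else 0) * u c +
          if c = (⟨2 * N + i, by omega⟩ : Fin d) then -(S i) else 0 := by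
      intro c
      simp only [rowC, x, Fin.ext_iff]
      by_cases h1 : (c : ℕ) < 2 * N
      · have h2 : ¬ (c : ℕ) = 2 * N + i := by omega
        simp [h1, h2]
      · by_cases h2 : (c : ℕ) = 2 * N + i
        · have h3 : (c : ℕ) < 2 * N + n := by omega
          have h4 : (c : ℕ) - 2 * N = i := by omega
          simp only [h2, if_true]
          simp [hi]
          field_simp
        · simp [h1, h2]
    rw [Finset.sum_congr rfl fun c _ => h1 c, Finset.sum_add_distrib]
    simp [S]
  · intro w hw
    rw [inner_eq_sumC, inner_eq_sumC]
    apply Finset.sum_congr rfl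
    intro c _
    by_cases h : w c = 0
    · simp [h]
    · simp [x, hw c h]

/-- Norm of a combination of orthonormal vectors. -/
lemma norm_sum_orthoC (j : ℕ) (w : ℕ → EuclideanSpace ℝ (Fin d)) (h1 : ∀ i < j, ‖w i‖ = 1)
    (h2 : ∀ i i', i < i' → i' < j → ⟪w i, w i'⟫ = 0) :
    (∀ i < j, ⟪w i, ∑ i' ∈ Finset.range j, w i'⟫ = 1) ∧
      ‖∑ i' ∈ Finset.range j, w i'‖ ^ 2 = j := by
  have key : ∀ i < j, ⟪w i, ∑ i' ∈ Finset.range j, w i'⟫ = 1 := by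
    intro i hi
    rw [inner_sum, Finset.sum_eq_single i]
    · rw [real_inner_self_eq_norm_sq, h1 i hi]; norm_num
    · intro i' hi' hne
      rw [Finset.mem_range] at hi'
      rcases lt_or_gt_of_ne hne with h | h
      · rw [real_inner_comm]; exact h2 _ _ h hi
      · exact h2 _ _ h hi'
    · intro h; exact absurd (Finset.mem_range.mpr hi) h
  refine ⟨key, ?_⟩
  rw [← real_inner_self_eq_norm_sq, sum_inner]
  rw [Finset.sum_congr rfl fun i hi => key i (Finset.mem_range.mp hi)]
  simp

end Geometry

section Stage

variable {d : ℕ}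

/-- threshold for rows -/
noncomputable def etaC (d : ℕ) : ℝ := 1 / (24 * d * Real.sqrt d)
/-- threshold for adaptive vectors -/
noncomputable def sigC (d : ℕ) : ℝ := 1 / (8 * Real.sqrt d)
/-- rounding accuracy -/
noncomputable def tauC (d : ℕ) : ℝ := 1 / (8 * d * Real.sqrt d)

/-- rounding to the grid of step `1 / (8 d ^ 2)` -/
noncomputable def roundC (w : EuclideanSpace ℝ (Fin d)) : EuclideanSpace ℝ (Fin d) :=
  WithLp.toLp 2 fun c => (⌊(8 * (d : ℝ) ^ 2) * w c⌋ : ℝ) / (8 * (d : ℝ) ^ 2)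

lemma tauC_lt_sigC (hd : 2 ≤ d) : tauC d < sigC d := by
  have hd' : (2 : ℝ) ≤ d := by exact_mod_cast hd
  have hs : 0 < Real.sqrt d := Real.sqrt_pos.mpr (by linarith)
  unfold tauC sigC
  apply one_div_lt_one_div_of_lt (by positivity)
  nlinarith

lemma norm_roundC (hd : 2 ≤ d) (w : EuclideanSpace ℝ (Fin d)) : ‖roundC w - w‖ ≤ tauC d := by
  have hd' : (2 : ℝ) ≤ d := by exact_mod_cast hd
  have hs : 0 < Real.sqrt d := Real.sqrt_pos.mpr (by linarith)
  have hss : Real.sqrt d ^ 2 = d := Real.sq_sqrt (by linarith)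
  have ht : 0 ≤ tauC d := by unfold tauC; positivity
  apply le_of_sq_le_sq _ ht
  rw [norm_sq_eq_sumC]
  have hH : (0 : ℝ) < 8 * (d : ℝ) ^ 2 := by positivity
  calc ∑ c, (roundC w - w) c ^ 2 ≤ ∑ c : Fin d, (1 / (8 * (d : ℝ) ^ 2)) ^ 2 := by
        apply Finset.sum_le_sum
        intro c _
        have h1 := Int.floor_le ((8 * (d : ℝ) ^ 2) * w c)
        have h2 := Int.lt_floor_add_one ((8 * (d : ℝ) ^ 2) * w c)
        have h3 : (roundC w - w) c =
            (⌊(8 * (d : ℝ) ^ 2) * w c⌋ - (8 * (d : ℝ) ^ 2) * w c) / (8 * (d : ℝ) ^ 2) := by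
          simp only [roundC, PiLp.sub_apply]
          field_simp
        rw [h3, div_pow, div_pow]
        apply div_le_div_of_nonneg_right _ (by positivity)
        rw [sq_le_sq, abs_le]
        rw [abs_one]
        constructor <;> linarith
    _ = tauC d ^ 2 := by
        simp only [Finset.sum_const, Finset.card_univ, Fintype.card_fin, nsmul_eq_mul]
        unfold tauC
        rw [div_pow, div_pow, mul_pow (8 * (d : ℝ)), hss]
        field_simp

lemma roundC_supp {w : EuclideanSpace ℝ (Fin d)} {c : Fin d} (h : roundC w c ≠ 0) : w c ≠ 0 := by
  intro h0
  apply h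
  simp [roundC, h0]

/-- The feasible sets contain a small ball. -/
lemma exists_ballC {N B n j : ℕ} {b : ℕ → Fin d → ℕ} (hb : ∀ i < n, ∀ c, b i c < B)
    (hN : 2 * N + n ≤ d) (hd : 2 ≤ d) (hj : j ≤ N) (w : ℕ → EuclideanSpace ℝ (Fin d))
    (h1 : ∀ i < j, ‖w i‖ = 1)
    (h2 : ∀ i i', i < i' → i' < j → ⟪w i, w i'⟫ = 0)
    (h3 : ∀ i < j, ∀ c : Fin d, w i c ≠ 0 → (c : ℕ) < 2 * N) :
    ∃ x ∈ Metric.closedBall (0 : EuclideanSpace ℝ (Fin d)) 1,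
      Metric.closedBall x (1 / (48 * (d : ℝ) ^ 2 * Real.sqrt d)) ⊆
        setC n (etaC d) (sigC d) (fun i => rowC N B (b i) i) (fun i => roundC (w i))
          (n + 1 + j) := by
  have hd' : (2 : ℝ) ≤ d := by exact_mod_cast hd
  have hs : 0 < Real.sqrt d := Real.sqrt_pos.mpr (by linarith)
  have hss : Real.sqrt d ^ 2 = d := Real.sq_sqrt (by linarith)
  have hs1 : 1 ≤ Real.sqrt d := by
    rw [Real.one_le_sqrt]; linarith
  obtain ⟨k1, k2⟩ := norm_sum_orthoC j w h1 h2
  set s := Real.sqrt d with hsdef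
  set U := ∑ i' ∈ Finset.range j, w i' with hU
  set u : EuclideanSpace ℝ (Fin d) := (-(1 / (4 * s)) : ℝ) • U with hu
  have hjd : (j : ℝ) ≤ d := by exact_mod_cast (by omega : j ≤ d)
  have hUn : ‖U‖ ≤ s := by
    apply le_of_sq_le_sq _ hs.le
    rw [k2, hss]; exact hjd
  have hun : ‖u‖ ≤ 1 / 4 := by
    rw [hu, norm_smul, norm_neg, Real.norm_of_nonneg (by positivity)]
    calc 1 / (4 * s) * ‖U‖ ≤ 1 / (4 * s) * s := by gcongr
      _ = 1 / 4 := by field_simp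
  have husupp : ∀ c : Fin d, u c ≠ 0 → (c : ℕ) < 2 * N := by
    intro c hc
    by_contra hcn
    apply hc
    have : U c = 0 := by
      rw [hU, WithLp.ofLp_sum, Finset.sum_apply]
      apply Finset.sum_eq_zero
      intro i hi
      by_contra h
      exact hcn (h3 i (Finset.mem_range.mp hi) c h)
    simp [hu, this]
  obtain ⟨x, hx1, hx2, hx3⟩ := exists_xstarC hb hN (by omega) u husupp hun
  have hε : 1 / (48 * (d : ℝ) ^ 2 * s) ≤ 1 / 2 := by
    apply one_div_le_one_div_of_le (by norm_num)
    nlinarith [sq_nonneg (d : ℝ)]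
  refine ⟨x, by simp; linarith, ?_⟩
  intro y hy r hr
  have hyx : ‖y - x‖ ≤ 1 / (48 * (d : ℝ) ^ 2 * s) := by
    rwa [Metric.mem_closedBall, dist_eq_norm] at hy
  have hye : y = x + (y - x) := by abel
  unfold violC
  split_ifs with hr0 hr1
  · rw [not_lt, hye]
    refine (norm_add_le _ _).trans ?_
    linarith
  · rw [not_lt, hye, inner_add_right, hx2 _ (by omega), zero_add]
    refine (abs_real_inner_le_norm _ _).trans ?_
    have := norm_rowC (N := N) (hb (r - 1) (by omega)) (r - 1) (by omega : 1 ≤ d)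
    calc _ ≤ (2 * d) * (1 / (48 * (d : ℝ) ^ 2 * s)) := by gcongr
      _ = etaC d := by
        unfold etaC; rw [← hsdef]; field_simp; norm_num
  · rw [not_lt]
    set i := r - n - 1 with hi
    have hij : i < j := by omega
    have e1 : ⟪w i, x⟫ = -(1 / (4 * s)) := by
      rw [hx3 _ (h3 i hij), hu, real_inner_smul_right, k1 i hij, mul_one]
    have e2 : ⟪roundC (w i), y⟫ = ⟪w i, x⟫ + ⟪w i, y - x⟫ + ⟪roundC (w i) - w i, y⟫ := by
      rw [inner_sub_left, inner_sub_right]; ring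
    have e3 : ⟪w i, y - x⟫ ≤ 1 / (48 * (d : ℝ) ^ 2 * s) := by
      refine (real_inner_le_norm _ _).trans ?_
      rw [h1 i hij, one_mul]; exact hyx
    have hyn : ‖y‖ ≤ 1 := by
      rw [hye]
      refine (norm_add_le _ _).trans ?_
      linarith
    have e4 : ⟪roundC (w i) - w i, y⟫ ≤ tauC d := by
      refine (real_inner_le_norm _ _).trans ?_
      have := norm_roundC hd (w i)
      have ht : 0 ≤ tauC d := (norm_nonneg _).trans this
      calc _ ≤ tauC d * 1 := by gcongr
        _ = _ := mul_one _
    have e5 : 1 / (48 * (d : ℝ) ^ 2 * s) ≤ 1 / (16 * s) := by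
      apply one_div_le_one_div_of_le (by positivity)
      nlinarith
    have e6 : tauC d ≤ 1 / (16 * s) := by
      unfold tauC
      apply one_div_le_one_div_of_le (by positivity)
      nlinarith
    have e7 : 1 / (16 * s) = (1 / s) / 16 := by field_simp
    have e8 : 1 / (4 * s) = (1 / s) / 4 := by field_simp
    have e9 : sigC d = (1 / s) / 8 := by unfold sigC; rw [← hsdef]; field_simp
    rw [e2, e1]
    rw [e7] at e5 e6
    rw [e8, e9]
    linarith

/-- State of the adaptive construction after `j` vectors were created. -/
structure StageC {M : ℕ}
    (alg : MemAlg M (EuclideanSpace ℝ (Fin d)) (Option (EuclideanSpace ℝ (Fin d))))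
    (n k T j : ℕ) (a w : ℕ → EuclideanSpace ℝ (Fin d)) (t : ℕ → ℕ) : Prop where
  unit : ∀ i < j, ‖w i‖ = 1
  ortho : ∀ i i', i < i' → i' < j → ⟪w i, w i'⟫ = 0
  supp : ∀ i < j, ∀ c : Fin d, w i c ≠ 0 →
    2 * k * (i / k) ≤ (c : ℕ) ∧ (c : ℕ) < 2 * k * (i / k) + 2 * k
  time : ∀ i < j, t i ≤ T - 1
  mono : ∀ i i', i < i' → i' < j → t i < t i'
  feas : ∀ i < j, ∀ r < n + 1 + i, ¬ violC n (etaC d) (sigC d) a (fun i => roundC (w i)) r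
    (alg.query (alg.mem (oracC n (etaC d) (sigC d) a (fun i => roundC (w i)) (n + 1 + j)) (t i)))
  before : ∀ i < j, ∀ τ < t i, ∃ r < n + 1 + i,
    violC n (etaC d) (sigC d) a (fun i => roundC (w i)) r
      (alg.query (alg.mem (oracC n (etaC d) (sigC d) a (fun i => roundC (w i)) (n + 1 + j)) τ))
  perp : ∀ i < j, ∀ i' ≤ i, i' / k = i / k → ⟪w i,
    alg.query (alg.mem (oracC n (etaC d) (sigC d) a (fun i => roundC (w i)) (n + 1 + j)) (t i'))⟫ = 0

lemma abs_inner_roundC (hd : 2 ≤ d) {w x : EuclideanSpace ℝ (Fin d)} (h : ⟪w, x⟫ = 0)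
    (hx : ‖x‖ ≤ 1) : |⟪roundC w, x⟫| ≤ tauC d := by
  have e : ⟪roundC w, x⟫ = ⟪roundC w - w, x⟫ := by rw [inner_sub_left, h, sub_zero]
  rw [e]
  refine (abs_real_inner_le_norm _ _).trans ?_
  have := norm_roundC hd w
  have ht : 0 ≤ tauC d := (norm_nonneg _).trans this
  calc _ ≤ tauC d * 1 := by gcongr
    _ = _ := mul_one _

lemma stageC_zero {M : ℕ}
    (alg : MemAlg M (EuclideanSpace ℝ (Fin d)) (Option (EuclideanSpace ℝ (Fin d))))
    (n k T : ℕ) (a w : ℕ → EuclideanSpace ℝ (Fin d)) (t : ℕ → ℕ) : StageC alg n k T 0 a w t := by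
  constructor <;> intros <;> omega

lemma stageC_succ {M : ℕ}
    {alg : MemAlg M (EuclideanSpace ℝ (Fin d)) (Option (EuclideanSpace ℝ (Fin d)))}
    {n k P T j B : ℕ} {b : ℕ → Fin d → ℕ} (hb : ∀ i < n, ∀ c, b i c < B)
    (hN : 2 * (P * k) + n ≤ d) (hd : 2 ≤ d) (hk : 0 < k) (hj : j < P * k)
    (hsol : SolvesFeasibility d alg T (1 / (48 * (d : ℝ) ^ 2 * Real.sqrt d)))
    {w : ℕ → EuclideanSpace ℝ (Fin d)} {t : ℕ → ℕ}
    (hst : StageC alg n k T j (fun i => rowC (P * k) B (b i) i) w t) :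
    ∃ w' t', StageC alg n k T (j + 1) (fun i => rowC (P * k) B (b i) i) w' t' := by
  classical
  set a : ℕ → EuclideanSpace ℝ (Fin d) := fun i => rowC (P * k) B (b i) i with ha
  have hd' : (2 : ℝ) ≤ d := by exact_mod_cast hd
  have hη : 0 ≤ etaC d := by unfold etaC; positivity
  have hblk : ∀ i < P * k, 2 * k * (i / k) + 2 * k ≤ 2 * (P * k) := by
    intro i hi
    have h1 : i / k < P := by rwa [Nat.div_lt_iff_lt_mul hk]
    have h2 : (i / k + 1) * k ≤ P * k := Nat.mul_le_mul_right k h1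
    nlinarith
  set v : ℕ → EuclideanSpace ℝ (Fin d) := fun i => roundC (w i) with hv
  set O := oracC n (etaC d) (sigC d) a v (n + 1 + j) with hO
  have hball := exists_ballC (j := j) hb hN hd hj.le w hst.unit hst.ortho
    (fun i hi c hc => lt_of_lt_of_le (hst.supp i hi c hc).2 (hblk i (by omega)))
  have hout := hsol _ convex_setC (setC_subset (by omega)) hball O (isSep_oracC hη)
  have hex : ∃ τ, alg.query (alg.mem O τ) ∈ setC n (etaC d) (sigC d) a v (n + 1 + j) :=
    ⟨T - 1, hout⟩
  obtain ⟨ts, hts1, hts2, hts3⟩ : ∃ ts, ts ≤ T - 1 ∧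
      alg.query (alg.mem O ts) ∈ setC n (etaC d) (sigC d) a v (n + 1 + j) ∧
      ∀ τ < ts, ∃ r < n + 1 + j, violC n (etaC d) (sigC d) a v r (alg.query (alg.mem O τ)) := by
    refine ⟨Nat.find hex, Nat.find_min' hex hout, Nat.find_spec hex, ?_⟩
    intro τ hτ
    have := Nat.find_min hex hτ
    simp only [setC, Set.mem_ofPred_eq] at this
    push Not at this
    exact this
  have hlt : ∀ i < j, t i < ts := by
    intro i hi
    rcases lt_trichotomy (t i) ts with h | h | h
    · exact h
    · exfalso
      have h1 := hst.perp i hi i le_rfl rfl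
      have h0 : ‖alg.query (alg.mem O (t i))‖ ≤ 1 := by
        have := hst.feas i hi 0 (by omega)
        simpa [violC] using this
      have h2 := abs_inner_roundC hd h1 h0
      have h3 := tauC_lt_sigC hd
      have h4 := hts2 (n + 1 + i) (by omega)
      rw [← h] at h4
      apply h4
      unfold violC
      rw [if_neg (by omega), if_neg (by omega)]
      have e : n + 1 + i - n - 1 = i := by omega
      rw [e]
      rw [abs_le] at h2
      linarith [h2.1]
    · exfalso
      obtain ⟨r, hr, hvr⟩ := hst.before i hi ts h
      exact hts2 r (by omega) hvr
  set p := j / k with hp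
  have hpj : k * p ≤ j := Nat.mul_div_le j k
  have hpj2 : j < k * p + k := by
    have := Nat.lt_mul_div_succ j hk
    rw [← hp] at this
    linarith
  set S : Finset (EuclideanSpace ℝ (Fin d)) :=
    ((Finset.Ico (k * p) j).image (fun i => alg.query (alg.mem O (t i))) ∪
      {alg.query (alg.mem O ts)}) ∪ (Finset.Ico (k * p) j).image w with hS
  have hcard : S.card < 2 * k := by
    have h1 := Finset.card_union_le ((Finset.Ico (k * p) j).image
      (fun i => alg.query (alg.mem O (t i))) ∪ {alg.query (alg.mem O ts)})
      ((Finset.Ico (k * p) j).image w)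
    have h2 := Finset.card_union_le ((Finset.Ico (k * p) j).image
      (fun i => alg.query (alg.mem O (t i)))) {alg.query (alg.mem O ts)}
    have h3 : ((Finset.Ico (k * p) j).image
      (fun i => alg.query (alg.mem O (t i)))).card ≤ j - k * p := by
      simpa using Finset.card_image_le (s := Finset.Ico (k * p) j)
        (f := fun i => alg.query (alg.mem O (t i)))
    have h4 : ((Finset.Ico (k * p) j).image w).card ≤ j - k * p := by
      simpa using Finset.card_image_le (s := Finset.Ico (k * p) j) (f := w)
    rw [Finset.card_singleton] at h2
    rw [hS]
    omega
  obtain ⟨u, hu1, hu2, hu3⟩ := exists_unitC (d := d) (2 * k * p) (2 * k)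
    (by have := hblk j hj; rw [← hp] at this; omega) S hcard
  set w' := Function.update w j u with hw'
  set t' := Function.update t j ts with ht'
  have hww : ∀ i, i ≠ j → w' i = w i := fun i hi => Function.update_of_ne hi _ _
  have hwj : w' j = u := Function.update_self _ _ _
  have htt : ∀ i, i ≠ j → t' i = t i := fun i hi => Function.update_of_ne hi _ _
  have htj : t' j = ts := Function.update_self _ _ _
  set v' : ℕ → EuclideanSpace ℝ (Fin d) := fun i => roundC (w' i) with hv'
  have hvv : ∀ i < j, v i = v' i := by
    intro i hi; simp only [hv, hv']; rw [hww i (by omega)]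
  set O' := oracC n (etaC d) (sigC d) a v' (n + 1 + (j + 1)) with hO'
  have hmem : ∀ τ ≤ ts, alg.mem O' τ = alg.mem O τ := by
    intro τ
    induction τ with
    | zero => intro _; rfl
    | succ τ ih =>
      intro h
      have ih' := ih (by omega)
      simp only [MemAlg.mem]
      rw [ih']
      congr 1
      exact (oracC_congr hvv le_rfl (by omega) (hts3 τ (by omega))).symm
  have hviol : ∀ r < n + 1 + j, ∀ x, violC n (etaC d) (sigC d) a v r x ↔
      violC n (etaC d) (sigC d) a v' r x := fun r hr x => violC_congr hvv hr x
  have htle : ∀ i ≤ j, t' i ≤ ts := by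
    intro i hi
    rcases hi.lt_or_eq with h | h
    · rw [htt i (by omega)]; exact (hlt i h).le
    · rw [h, htj]
  refine ⟨w', t', ?_, ?_, ?_, ?_, ?_, ?_, ?_, ?_⟩
  · intro i hi
    rcases (Nat.lt_succ_iff.mp hi).lt_or_eq with h | h
    · rw [hww i (by omega)]; exact hst.unit i h
    · rw [h, hwj]; exact hu1
  · intro i i' h1 h2
    rcases (Nat.lt_succ_iff.mp h2).lt_or_eq with h | h
    · rw [hww i (by omega), hww i' (by omega)]; exact hst.ortho i i' h1 h
    · subst h
      rw [hwj, hww i (by omega)]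
      by_cases hblock : k * p ≤ i
      · rw [real_inner_comm]
        apply hu3
        rw [hS]
        apply Finset.mem_union_right
        exact Finset.mem_image_of_mem _ (Finset.mem_Ico.mpr ⟨hblock, h1⟩)
      · rw [inner_eq_sumC]
        apply Finset.sum_eq_zero
        intro c _
        by_contra hne
        have hc1 : w i c ≠ 0 := left_ne_zero_of_mul hne
        have hc2 : u c ≠ 0 := right_ne_zero_of_mul hne
        have g1 := (hst.supp i h1 c hc1).2
        have g2 := (hu2 c hc2).1
        have g3 : i / k < p := by
          rw [Nat.div_lt_iff_lt_mul hk, mul_comm]; omega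
        have g4 : 2 * k * (i / k + 1) ≤ 2 * k * p := Nat.mul_le_mul_left _ g3
        have g5 : 2 * k * (i / k + 1) = 2 * k * (i / k) + 2 * k := by ring
        omega
  · intro i hi c hc
    rcases (Nat.lt_succ_iff.mp hi).lt_or_eq with h | h
    · rw [hww i (by omega)] at hc; exact hst.supp i h c hc
    · subst h
      rw [hwj] at hc; exact hu2 c hc
  · intro i hi
    exact (htle i (by omega)).trans hts1
  · intro i i' h1 h2
    rcases (Nat.lt_succ_iff.mp h2).lt_or_eq with h | h
    · rw [htt i (by omega), htt i' (by omega)]; exact hst.mono i i' h1 h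
    · subst h
      rw [htj, htt i (by omega)]; exact hlt i h1
  · intro i hi r hr
    rw [hmem _ (htle i (by omega)), ← hviol r (by omega)]
    rcases (Nat.lt_succ_iff.mp hi).lt_or_eq with h | h
    · rw [htt i (by omega)]; exact hst.feas i h r hr
    · subst h
      rw [htj]; exact hts2 r hr
  · intro i hi τ hτ
    have hτs : τ < ts := lt_of_lt_of_le hτ (htle i (by omega))
    rw [hmem _ hτs.le]
    rcases (Nat.lt_succ_iff.mp hi).lt_or_eq with h | h
    · rw [htt i (by omega)] at hτ
      obtain ⟨r, hr, hvr⟩ := hst.before i h τ hτ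
      exact ⟨r, hr, (hviol r (by omega) _).mp hvr⟩
    · obtain ⟨r, hr, hvr⟩ := hts3 τ hτs
      exact ⟨r, by omega, (hviol r (by omega) _).mp hvr⟩
  · intro i hi i' hi' hblock
    rw [hmem _ (htle i' (by omega))]
    rcases (Nat.lt_succ_iff.mp hi).lt_or_eq with h | h
    · rw [hww i (by omega), htt i' (by omega)]
      exact hst.perp i h i' hi' hblock
    · subst h
      rw [hwj]
      apply hu3
      rw [hS]
      apply Finset.mem_union_left
      rcases hi'.lt_or_eq with h' | h'
      · rw [htt i' (by omega)]
        apply Finset.mem_union_left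
        refine Finset.mem_image.mpr ⟨i', Finset.mem_Ico.mpr ⟨?_, h'⟩, rfl⟩
        rw [← hp] at hblock
        rw [← hblock]
        exact Nat.mul_div_le i' k
      · rw [h', htj]
        apply Finset.mem_union_right
        simp

lemma stageC_exists {M : ℕ}
    {alg : MemAlg M (EuclideanSpace ℝ (Fin d)) (Option (EuclideanSpace ℝ (Fin d)))}
    {n k P T B : ℕ} {b : ℕ → Fin d → ℕ} (hb : ∀ i < n, ∀ c, b i c < B)
    (hN : 2 * (P * k) + n ≤ d) (hd : 2 ≤ d) (hk : 0 < k)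
    (hsol : SolvesFeasibility d alg T (1 / (48 * (d : ℝ) ^ 2 * Real.sqrt d))) :
    ∃ w t, StageC alg n k T (P * k) (fun i => rowC (P * k) B (b i) i) w t := by
  have key : ∀ j ≤ P * k, ∃ w t, StageC alg n k T j (fun i => rowC (P * k) B (b i) i) w t := by
    intro j
    induction j with
    | zero => intro _; exact ⟨fun _ => 0, fun _ => 0, stageC_zero _ _ _ _ _ _ _⟩
    | succ j ih =>
      intro hj
      obtain ⟨w, t, h⟩ := ih (by omega)
      exact stageC_succ hb hN hd hk (by omega) hsol h
  exact key _ le_rfl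

/-- The easy linear lower bound. -/
lemma linear_boundC {M : ℕ}
    {alg : MemAlg M (EuclideanSpace ℝ (Fin d)) (Option (EuclideanSpace ℝ (Fin d)))}
    {N T : ℕ} (hN : 2 * N ≤ d) (hN2 : 2 ≤ N)
    (hsol : SolvesFeasibility d alg T (1 / (48 * (d : ℝ) ^ 2 * Real.sqrt d))) : N ≤ T := by
  obtain ⟨w, t, h⟩ := stageC_exists (n := 0) (k := N) (P := 1) (B := 1) (b := fun _ _ => 0)
    (by intro i hi; omega) (by omega) (by omega) (by omega) hsol
  have key : ∀ i < N, i ≤ t i := by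
    intro i
    induction i with
    | zero => intro _; omega
    | succ i ih =>
      intro hi
      have h1 := ih (by omega)
      have h2 := h.mono i (i + 1) (by omega) (by omega)
      omega
  have h1 := key (N - 1) (by omega)
  have h2 := h.time (N - 1) (by omega)
  omega

end Stage

section Counting

variable {d : ℕ}

/-- Equal codes give equal queries. -/
lemma decodeC {M : ℕ}
    (alg : MemAlg M (EuclideanSpace ℝ (Fin d)) (Option (EuclideanSpace ℝ (Fin d))))
    {n h N : ℕ} {η σ : ℝ} {a a' v v' : ℕ → EuclideanSpace ℝ (Fin d)} {s0 s0' : ℕ}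
    (hv : ∀ j < N, v j = v' j)
    (hmem : alg.mem (oracC n η σ a v (n + 1 + N)) s0 = alg.mem (oracC n η σ a' v' (n + 1 + N)) s0')
    (hptr : ∀ s < h, ptrC n η σ a v (n + 1 + N)
        (alg.query (alg.mem (oracC n η σ a v (n + 1 + N)) (s0 + s))) =
      ptrC n η σ a' v' (n + 1 + N)
        (alg.query (alg.mem (oracC n η σ a' v' (n + 1 + N)) (s0' + s))))
    (hrev : ∀ i < n, (∃ s < h, ptrC n η σ a v (n + 1 + N)
        (alg.query (alg.mem (oracC n η σ a v (n + 1 + N)) (s0 + s))) = i + 1) → a i = a' i) :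
    ∀ s ≤ h, alg.mem (oracC n η σ a v (n + 1 + N)) (s0 + s) =
      alg.mem (oracC n η σ a' v' (n + 1 + N)) (s0' + s) := by
  intro s
  induction s with
  | zero => intro _; exact hmem
  | succ s ih =>
    intro hs
    have ih' := ih (by omega)
    have hp := hptr s (by omega)
    have hr := fun i hi he => hrev i hi ⟨s, by omega, he⟩
    rw [← add_assoc, ← add_assoc]
    simp only [MemAlg.mem]
    rw [← ih'] at hp ⊢
    congr 1
    set x := alg.query (alg.mem (oracC n η σ a v (n + 1 + N)) (s0 + s))
    unfold oracC
    rw [← hp]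
    split_ifs with hlt
    · congr 1
      set r := ptrC n η σ a v (n + 1 + N) x
      unfold respC
      split_ifs with h0 h1
      · rfl
      · rw [hr (r - 1) (by omega) (by omega)]
      · rw [hv _ (by omega)]
    · rfl

lemma numericC {k : ℕ} (hd : 2 ≤ d) (hk : 0 < k) (hkd : 2048 * k ≤ d) :
    2 * etaC d + tauC d < sigC d / (k * 1024) := by
  have hd' : (2 : ℝ) ≤ d := by exact_mod_cast hd
  have hk' : (0 : ℝ) < k := by exact_mod_cast hk
  have hkd' : (2048 : ℝ) * k ≤ d := by exact_mod_cast hkd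
  have hs : 0 < Real.sqrt d := Real.sqrt_pos.mpr (by linarith)
  have e1 : 2 * etaC d + tauC d = (5 / 24) / (d * Real.sqrt d) := by
    unfold etaC tauC; field_simp; norm_num
  have e2 : sigC d / (k * 1024) = 1 / (8 * k * 1024 * Real.sqrt d) := by
    unfold sigC; field_simp
  rw [e1, e2, div_lt_div_iff₀ (by positivity) (by positivity)]
  have : (5 / 24 : ℝ) * (8 * k * 1024) < d := by linarith
  nlinarith

lemma packC {k : ℕ} (hd : 2 ≤ d) (hk : 0 < k) (hkd : 2048 * k ≤ d)
    (x v : ℕ → EuclideanSpace ℝ (Fin d)) (a a' : EuclideanSpace ℝ (Fin d)) (Δ : ℕ → ℤ)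
    (h1 : ∀ l < k, ⟪v l, x (l + 1)⟫ ≤ -sigC d)
    (h2 : ∀ l l', l < l' → l' < k → |⟪v l', x (l + 1)⟫| ≤ tauC d)
    (ha : ∀ l < k, |⟪a, x (l + 1)⟫| ≤ etaC d) (ha' : ∀ l < k, |⟪a', x (l + 1)⟫| ≤ etaC d)
    (hΔ : ∀ l < k, |Δ l| ≤ 1024)
    (hdiff : a - a' = ∑ l ∈ Finset.range k, ((Δ l : ℝ) / (k * 1024)) • v l) :
    ∀ l < k, Δ l = 0 := by
  by_contra hcon
  push Not at hcon
  classical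
  obtain ⟨l, ⟨hl, hl0⟩, hmin⟩ : ∃ l, (l < k ∧ Δ l ≠ 0) ∧ ∀ l' < l, Δ l' = 0 := by
    refine ⟨Nat.find hcon, Nat.find_spec hcon, ?_⟩
    intro l' hl'
    have := Nat.find_min hcon hl'
    have h3 := (Nat.find_spec hcon).1
    by_contra hne
    exact this ⟨by omega, hne⟩
  have hk' : (0 : ℝ) < k := by exact_mod_cast hk
  have hnum := numericC hd hk hkd
  have e1 : ⟪a - a', x (l + 1)⟫ =
      ∑ l' ∈ Finset.range k, ((Δ l' : ℝ) / (k * 1024)) * ⟪v l', x (l + 1)⟫ := by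
    rw [hdiff, sum_inner]
    apply Finset.sum_congr rfl
    intro l' _
    rw [real_inner_smul_left]
  have htau : 0 ≤ tauC d := by unfold tauC; positivity
  have hsig : 0 ≤ sigC d := by unfold sigC; positivity
  have e2 : |⟪a - a', x (l + 1)⟫| ≤ 2 * etaC d := by
    rw [inner_sub_left]
    have g1 := ha l hl
    have g2 := ha' l hl
    rw [abs_le] at *
    constructor <;> linarith [g1.1, g1.2, g2.1, g2.2]
  rw [← Finset.add_sum_erase _ _ (Finset.mem_range.mpr hl)] at e1
  set rest := ∑ l' ∈ (Finset.range k).erase l, ((Δ l' : ℝ) / (k * 1024)) * ⟪v l', x (l + 1)⟫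
  have e3 : |rest| ≤ tauC d := by
    refine (Finset.abs_sum_le_sum_abs _ _).trans ?_
    calc _ ≤ ∑ l' ∈ (Finset.range k).erase l, tauC d / k := by
          apply Finset.sum_le_sum
          intro l' hl'
          rw [Finset.mem_erase, Finset.mem_range] at hl'
          rcases lt_or_gt_of_ne hl'.1 with h | h
          · rw [hmin l' h]; simp; positivity
          · rw [abs_mul, abs_div]
            have g1 := h2 l l' h hl'.2
            have g2 : |(Δ l' : ℝ)| ≤ 1024 := by exact_mod_cast hΔ l' hl'.2
            rw [abs_of_pos (by positivity : (0 : ℝ) < k * 1024)]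
            calc _ ≤ (1024 : ℝ) / (k * 1024) * tauC d := by gcongr
              _ = tauC d / k := by field_simp
      _ ≤ ∑ l' ∈ Finset.range k, tauC d / k := by
          apply Finset.sum_le_sum_of_subset_of_nonneg (Finset.erase_subset _ _)
          intros; positivity
      _ = tauC d := by
          rw [Finset.sum_const, Finset.card_range, nsmul_eq_mul]
          field_simp
  have e4 : sigC d / (k * 1024) ≤ |((Δ l : ℝ) / (k * 1024)) * ⟪v l, x (l + 1)⟫| := by
    rw [abs_mul, abs_div, abs_of_pos (by positivity : (0 : ℝ) < k * 1024)]
    have g1 : (1 : ℝ) ≤ |(Δ l : ℝ)| := by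
      exact_mod_cast Int.one_le_abs hl0
    have g2 : sigC d ≤ |⟪v l, x (l + 1)⟫| := by
      have := h1 l hl
      rw [le_abs]; right; linarith
    calc sigC d / (k * 1024) = 1 / (k * 1024) * sigC d := by ring
      _ ≤ _ := by gcongr
  have e5 : |((Δ l : ℝ) / (k * 1024)) * ⟪v l, x (l + 1)⟫| ≤ |⟪a - a', x (l + 1)⟫| + |rest| := by
    have : ((Δ l : ℝ) / (k * 1024)) * ⟪v l, x (l + 1)⟫ = ⟪a - a', x (l + 1)⟫ - rest := by
      rw [e1]; ring
    rw [this]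
    exact abs_sub _ _
  linarith

/-- Pigeonhole on the windows. -/
lemma gapC {P k h T N : ℕ} (hN : N = P * k) (hP : 2 ≤ P) (hk : 0 < k) (hh : 0 < h)
    (hT : T ≤ (P - 1) * h)
    (t : ℕ → ℕ) (htime : ∀ i < N, t i ≤ T - 1) :
    ∃ p, p + 1 < P ∧ t (p * k + k) < t (p * k) + h := by
  by_contra hcon
  push Not at hcon
  have key : ∀ p, p < P → p * h ≤ t (p * k) := by
    intro p
    induction p with
    | zero => intro _; omega
    | succ p ih =>
      intro hp
      have h1 := ih (by omega)
      have h2 := hcon p hp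
      have e : (p + 1) * k = p * k + k := by ring
      have e' : (p + 1) * h = p * h + h := by ring
      rw [e, e']; omega
  have h1 := key (P - 1) (by omega)
  have h2 := htime ((P - 1) * k) (by
    rw [hN]; exact Nat.mul_lt_mul_of_pos_right (by omega) hk)
  have h3 : 0 < (P - 1) * h := Nat.mul_pos (by omega) hh
  omega

lemma injC {M : ℕ}
    {alg : MemAlg M (EuclideanSpace ℝ (Fin d)) (Option (EuclideanSpace ℝ (Fin d)))}
    {n k P T h B : ℕ} (hB : B = 8 * d ^ 2 * (k * 1024)) {b b' : ℕ → Fin d → ℕ}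
    (hN : 2 * (P * k) + n ≤ d) (hd : 2 ≤ d) (hk : 0 < k) (hkd : 2048 * k ≤ d)
    {w w' : ℕ → EuclideanSpace ℝ (Fin d)} {t t' : ℕ → ℕ} {O O' : _}
    (hO : O = oracC n (etaC d) (sigC d) (fun i => rowC (P * k) B (b i) i)
      (fun i => roundC (w i)) (n + 1 + P * k))
    (hO' : O' = oracC n (etaC d) (sigC d) (fun i => rowC (P * k) B (b' i) i)
      (fun i => roundC (w' i)) (n + 1 + P * k))
    (hst : StageC alg n k T (P * k) (fun i => rowC (P * k) B (b i) i) w t)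
    (hst' : StageC alg n k T (P * k) (fun i => rowC (P * k) B (b' i) i) w' t')
    {p : ℕ} (hp : p + 1 < P) (hgap : t (p * k + k) < t (p * k) + h)
    (hz : ∀ j < P * k, ∀ c, ⌊(8 * (d : ℝ) ^ 2) * w j c⌋ = ⌊(8 * (d : ℝ) ^ 2) * w' j c⌋)
    (hmem : alg.mem O (t (p * k)) = alg.mem O' (t' (p * k)))
    (hptr : ∀ s < h, ptrC n (etaC d) (sigC d) (fun i => rowC (P * k) B (b i) i)
        (fun i => roundC (w i)) (n + 1 + P * k) (alg.query (alg.mem O (t (p * k) + s))) =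
      ptrC n (etaC d) (sigC d) (fun i => rowC (P * k) B (b' i) i)
        (fun i => roundC (w' i)) (n + 1 + P * k) (alg.query (alg.mem O' (t' (p * k) + s))))
    (hrel : ∀ l ≤ k, t (p * k + l) - t (p * k) = t' (p * k + l) - t' (p * k))
    {s s' : ℕ → ℕ → ℕ} (hs : ∀ i l, s i l < 1024) (hs' : ∀ i l, s' i l < 1024)
    (hrev : ∀ i < n, (∃ τ < h, ptrC n (etaC d) (sigC d) (fun i => rowC (P * k) B (b i) i)
        (fun i => roundC (w i)) (n + 1 + P * k) (alg.query (alg.mem O (t (p * k) + τ))) = i + 1) →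
      (∀ c, b i c = b' i c) ∧ ∀ l < k, s i l = s' i l)
    (hunrev : ∀ i < n, (¬ ∃ τ < h, ptrC n (etaC d) (sigC d) (fun i => rowC (P * k) B (b i) i)
        (fun i => roundC (w i)) (n + 1 + P * k) (alg.query (alg.mem O (t (p * k) + τ))) = i + 1) →
      ∀ c, (b i c : ℤ) + ∑ l ∈ Finset.range k, (s i l : ℤ) * ⌊(8 * (d : ℝ) ^ 2) * w (p * k + l) c⌋ =
        (b' i c : ℤ) + ∑ l ∈ Finset.range k,
          (s' i l : ℤ) * ⌊(8 * (d : ℝ) ^ 2) * w (p * k + l) c⌋) :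
    ∀ i < n, (∀ c, b i c = b' i c) ∧ ∀ l < k, s i l = s' i l := by
  have hd' : (2 : ℝ) ≤ d := by exact_mod_cast hd
  have hk' : (0 : ℝ) < k := by exact_mod_cast hk
  have hv : ∀ j < P * k, roundC (w j) = roundC (w' j) := by
    intro j hj
    ext c
    simp only [roundC]
    rw [hz j hj c]
  have hpk : p * k + k < P * k := by
    have h1 : (p + 1) * k < P * k := Nat.mul_lt_mul_of_pos_right hp hk
    have h2 : (p + 1) * k = p * k + k := by ring
    omega
  have hdec : ∀ τ ≤ h, alg.mem O (t (p * k) + τ) = alg.mem O' (t' (p * k) + τ) := by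
    subst hO hO'
    apply decodeC alg hv hmem hptr
    intro i hi hex
    have := (hrev i hi hex).1
    have e : b i = b' i := funext this
    show rowC (P * k) B (b i) i = rowC (P * k) B (b' i) i
    rw [e]
  have hle : ∀ u : ℕ → ℕ, (∀ i i', i < i' → i' < P * k → u i < u i') → ∀ l l', l ≤ l' → l' ≤ k →
      u (p * k + l) ≤ u (p * k + l') := by
    intro u hu l l' hll hl'
    rcases hll.lt_or_eq with h | h
    · exact (hu _ _ (by omega) (by omega)).le
    · rw [h]
  have hq : ∀ l ≤ k, alg.mem O (t (p * k + l)) = alg.mem O' (t' (p * k + l)) := by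
    intro l hl
    have h1 := hle t hst.mono 0 l (by omega) hl
    have h2 := hle t' hst'.mono 0 l (by omega) hl
    have h3 := hle t hst.mono l k hl le_rfl
    have h4 := hrel l hl
    rw [add_zero] at h1 h2
    have h5 := hdec (t (p * k + l) - t (p * k)) (by omega)
    rw [h4] at h5
    rw [show t (p * k + l) = t (p * k) + (t' (p * k + l) - t' (p * k)) by omega, h5]
    congr 1
    omega
  intro i hi
  by_cases hex : ∃ τ < h, ptrC n (etaC d) (sigC d) (fun i => rowC (P * k) B (b i) i)
        (fun i => roundC (w i)) (n + 1 + P * k) (alg.query (alg.mem O (t (p * k) + τ))) = i + 1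
  · exact hrev i hi hex
  have hun := hunrev i hi hex
  have hfe := hst.feas
  have hfe' := hst'.feas
  have hpe := hst.perp
  rw [← hO] at hfe hpe
  rw [← hO'] at hfe'
  have hzero : ∀ l < k, ((s' i l : ℤ) - s i l) = 0 := by
    apply packC hd hk hkd (fun l => alg.query (alg.mem O (t (p * k + l))))
      (fun l => roundC (w (p * k + l))) (rowC (P * k) B (b i) i) (rowC (P * k) B (b' i) i)
      (fun l => (s' i l : ℤ) - s i l)
    · intro l hl
      have := hfe (p * k + (l + 1)) (by omega) (n + 1 + (p * k + l)) (by omega)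
      unfold violC at this
      rw [if_neg (by omega), if_neg (by omega), not_lt] at this
      have e : n + 1 + (p * k + l) - n - 1 = p * k + l := by omega
      rw [e] at this
      exact this
    · intro l l' hll hl'
      apply abs_inner_roundC hd
      · apply hpe _ (by omega) _ (by omega)
        rw [mul_comm p k, Nat.mul_add_div hk, Nat.mul_add_div hk, Nat.div_eq_of_lt hl',
          Nat.div_eq_of_lt (by omega : l + 1 < k)]
      · have := hfe (p * k + (l + 1)) (by omega) 0 (by omega)
        simpa [violC] using this
    · intro l hl
      have := hfe (p * k + (l + 1)) (by omega) (i + 1) (by omega)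
      unfold violC at this
      rw [if_neg (by omega), if_pos (by omega), not_lt] at this
      exact this
    · intro l hl
      have := hfe' (p * k + (l + 1)) (by omega) (i + 1) (by omega)
      unfold violC at this
      rw [if_neg (by omega), if_pos (by omega), not_lt, ← hq _ (by omega)] at this
      exact this
    · intro l hl
      have h1 := hs i l
      have h2 := hs' i l
      rw [abs_le]
      constructor <;> omega
    · ext c
      have hc := hun c
      have hBR : (B : ℝ) = 8 * (d : ℝ) ^ 2 * (k * 1024) := by rw [hB]; push_cast; ring
      have e1 : ((b i c : ℝ) - b' i c) = ∑ l ∈ Finset.range k,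
          ((s' i l : ℝ) - s i l) * (⌊(8 * (d : ℝ) ^ 2) * w (p * k + l) c⌋ : ℝ) := by
        have h1 : ((b i c : ℤ) : ℝ) + ((∑ l ∈ Finset.range k,
          (s i l : ℤ) * ⌊(8 * (d : ℝ) ^ 2) * w (p * k + l) c⌋ : ℤ) : ℝ) =
          ((b' i c : ℤ) : ℝ) + ((∑ l ∈ Finset.range k,
          (s' i l : ℤ) * ⌊(8 * (d : ℝ) ^ 2) * w (p * k + l) c⌋ : ℤ) : ℝ) := by exact_mod_cast hc
        push_cast at h1
        simp only [sub_mul, Finset.sum_sub_distrib]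
        linarith
      have e2 : (∑ l ∈ Finset.range k, ((((s' i l : ℤ) - s i l : ℤ) : ℝ) / (k * 1024)) •
          roundC (w (p * k + l))) c = ((b i c : ℝ) - b' i c) / B := by
        rw [e1, WithLp.ofLp_sum, Finset.sum_apply, Finset.sum_div]
        apply Finset.sum_congr rfl
        intro l _
        simp only [PiLp.smul_apply, roundC, smul_eq_mul]
        rw [hBR]
        push_cast
        field_simp
      rw [e2]
      simp only [rowC, PiLp.sub_apply]
      by_cases hcN : (c : ℕ) < 2 * (P * k)
      · simp only [hcN, if_true]
        ring
      · simp only [hcN, if_false, sub_self]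
        have : (b i c : ℝ) - b' i c = 0 := by
          rw [e1]
          apply Finset.sum_eq_zero
          intro l hl
          rw [Finset.mem_range] at hl
          have hw0 : w (p * k + l) c = 0 := by
            by_contra hne
            have g1 := (hst.supp (p * k + l) (by omega) c hne).2
            have g2 : (p * k + l) / k = p := by
              rw [mul_comm p k, Nat.mul_add_div hk, Nat.div_eq_of_lt hl, add_zero]
            rw [g2] at g1
            have g3 : 2 * k * p + 2 * k = 2 * (p * k + k) := by ring
            omega
          rw [hw0]; simp
        rw [this]; simp
  have hse : ∀ l < k, s i l = s' i l := by
    intro l hl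
    have := hzero l hl
    omega
  refine ⟨?_, hse⟩
  intro c
  have hc := hun c
  have e : ∑ l ∈ Finset.range k, (s i l : ℤ) * ⌊(8 * (d : ℝ) ^ 2) * w (p * k + l) c⌋ =
      ∑ l ∈ Finset.range k, (s' i l : ℤ) * ⌊(8 * (d : ℝ) ^ 2) * w (p * k + l) c⌋ := by
    apply Finset.sum_congr rfl
    intro l hl
    rw [hse l (Finset.mem_range.mp hl)]
  rw [e] at hc
  have := add_right_cancel hc
  exact_mod_cast this

end Counting

/-! ### Counting -/

lemma ofNat_injC {N x y : ℕ} [NeZero N] (hx : x < N) (hy : y < N)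
    (h : Fin.ofNat N x = Fin.ofNat N y) : x = y := by
  have := congrArg Fin.val h
  simp only [Fin.val_ofNat] at this
  rwa [Nat.mod_eq_of_lt hx, Nat.mod_eq_of_lt hy] at this

open Classical in
lemma countC {n d k P h B H J M : ℕ} (hk : 0 < k) (hP : 0 < P) (hh : 0 < h) (hH : 0 < H)
    (hB : B = H * (k * 1024))
    (p : (Fin n → Fin d → Fin B) → ℕ) (hp : ∀ b, p b < P)
    (m : (Fin n → Fin d → Fin B) → Fin M → Bool)
    (π : (Fin n → Fin d → Fin B) → ℕ → ℕ) (hπ : ∀ b τ, π b τ ≤ J)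
    (F : (Fin n → Fin d → Fin B) → ℕ → Fin d → ℤ)
    (hF : ∀ b, ∀ j < P * k, ∀ c, |F b j c| ≤ H)
    (hF0 : ∀ b, ∀ j < P * k, ∀ c : Fin d,
      ¬ (2 * k * (j / k) ≤ (c : ℕ) ∧ (c : ℕ) < 2 * k * (j / k) + 2 * k) → F b j c = 0)
    (ρ : (Fin n → Fin d → Fin B) → ℕ → ℕ) (hρ : ∀ b, ∀ l ≤ k, ρ b l < h)
    (hinj : ∀ b b' (s s' : Fin n → Fin k → Fin 1024), p b = p b' → m b = m b' →
      (∀ τ < h, π b τ = π b' τ) → (∀ l ≤ k, ρ b l = ρ b' l) →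
      (∀ j < P * k, ∀ c, F b j c = F b' j c) →
      (∀ i : Fin n, (∃ τ < h, π b τ = i + 1) → b i = b' i ∧ s i = s' i) →
      (∀ i : Fin n, (¬ ∃ τ < h, π b τ = i + 1) → ∀ c,
        ((b i c : ℕ) : ℤ) + ∑ l : Fin k, ((s i l : ℕ) : ℤ) * F b (p b * k + l) c =
        ((b' i c : ℕ) : ℤ) + ∑ l : Fin k, ((s' i l : ℕ) : ℤ) * F b (p b * k + l) c) →
      b = b' ∧ s = s') :
    B ^ (d * n) * 1024 ^ (k * n) ≤ P * (2 ^ M * ((J + 1) ^ h * ((2 * H + 1) ^ (2 * k * (P * k)) *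
      (h ^ (k + 1) * (B ^ (d * n) * (3 ^ (2 * k * n) * 1024 ^ (k * h))))))) := by
  have : NeZero P := ⟨hP.ne'⟩
  have : NeZero h := ⟨hh.ne'⟩
  have hB0 : 0 < B := by rw [hB]; positivity
  have : NeZero B := ⟨hB0.ne'⟩
  -- the shifted value
  let y : ((Fin n → Fin d → Fin B) × (Fin n → Fin k → Fin 1024)) → Fin n → ℕ → ℤ :=
    fun bs i c => if hc : c < d then
      (if ∃ τ < h, π bs.1 τ = i + 1 then ((bs.1 i ⟨c, hc⟩ : ℕ) : ℤ)
      else ((bs.1 i ⟨c, hc⟩ : ℕ) : ℤ) +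
        ∑ l : Fin k, ((bs.2 i l : ℕ) : ℤ) * F bs.1 (p bs.1 * k + l) ⟨c, hc⟩) else 0
  have hidx : ∀ b, ∀ l : Fin k, p b * k + l < P * k := by
    intro b l
    have h1 : (p b + 1) * k ≤ P * k := Nat.mul_le_mul_right _ (hp b)
    have h2 : (p b + 1) * k = p b * k + k := by ring
    have := l.2
    omega
  have hsum : ∀ b (s : Fin n → Fin k → Fin 1024) (i : Fin n) (c : Fin d),
      |∑ l : Fin k, ((s i l : ℕ) : ℤ) * F b (p b * k + l) c| ≤ B := by
    intro b s i c
    calc |∑ l : Fin k, ((s i l : ℕ) : ℤ) * F b (p b * k + l) c|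
        ≤ ∑ l : Fin k, |((s i l : ℕ) : ℤ) * F b (p b * k + l) c| :=
          Finset.abs_sum_le_sum_abs _ _
      _ ≤ ∑ l : Fin k, (1024 * H : ℤ) := by
          apply Finset.sum_le_sum
          intro l _
          rw [abs_mul]
          have h1 := hF b _ (hidx b l) c
          have h2 : |((s i l : ℕ) : ℤ)| ≤ 1024 := by
            rw [abs_of_nonneg (by positivity)]
            have := (s i l).2
            omega
          exact mul_le_mul h2 h1 (abs_nonneg _) (by norm_num)
      _ = B := by
          rw [hB]
          simp
          ring
  have hyb : ∀ bs i c, -(B : ℤ) ≤ y bs i c ∧ y bs i c < 2 * B := by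
    intro bs i c
    simp only [y]
    split_ifs with h1 h2
    · have := (bs.1 i ⟨c, h1⟩).2
      omega
    · have := (bs.1 i ⟨c, h1⟩).2
      have h3 := abs_le.mp (hsum bs.1 bs.2 i ⟨c, h1⟩)
      omega
    · omega
  have hBz : (0 : ℤ) < B := by exact_mod_cast hB0
  let Φ : ((Fin n → Fin d → Fin B) × (Fin n → Fin k → Fin 1024)) →
      (Fin P × (Fin M → Bool) × (Fin h → Fin (J + 1)) ×
        (Fin (P * k) → Fin (2 * k) → Fin (2 * H + 1)) × (Fin (k + 1) → Fin h) ×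
        (Fin n → Fin d → Fin B) × (Fin n → Fin (2 * k) → Fin 3) ×
        (Fin h → Fin k → Fin 1024)) :=
    fun bs => ⟨Fin.ofNat P (p bs.1), m bs.1, fun τ => Fin.ofNat _ (π bs.1 τ),
      fun j e => Fin.ofNat _ (if hc : 2 * k * (j / k) + e < d then
        (F bs.1 j ⟨2 * k * (j / k) + e, hc⟩ + H).toNat else 0),
      fun l => Fin.ofNat _ (ρ bs.1 l),
      fun i c => Fin.ofNat _ (y bs i c % B).toNat,
      fun i e => Fin.ofNat _ (y bs i (2 * k * p bs.1 + e) / B + 1).toNat,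
      fun τ l => if hc : π bs.1 τ - 1 < n then bs.2 ⟨π bs.1 τ - 1, hc⟩ l else 0⟩
  have hΦ : Function.Injective Φ := by
    rintro ⟨b, s⟩ ⟨b', s'⟩ heq
    simp only [Φ, Prod.mk.injEq] at heq
    obtain ⟨e1, e2, e3, e4, e5, e6, e7, e8⟩ := heq
    have f1 : p b = p b' := ofNat_injC (hp b) (hp b') e1
    have f3 : ∀ τ < h, π b τ = π b' τ := fun τ hτ =>
      ofNat_injC (Nat.lt_succ_of_le (hπ _ _)) (Nat.lt_succ_of_le (hπ _ _)) (congrFun e3 ⟨τ, hτ⟩)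
    have f5 : ∀ l ≤ k, ρ b l = ρ b' l := fun l hl =>
      ofNat_injC (hρ _ _ hl) (hρ _ _ hl) (congrFun e5 ⟨l, Nat.lt_succ_of_le hl⟩)
    have f4 : ∀ j < P * k, ∀ c, F b j c = F b' j c := by
      intro j hj c
      by_cases hc : 2 * k * (j / k) ≤ (c : ℕ) ∧ (c : ℕ) < 2 * k * (j / k) + 2 * k
      · have hc' : 2 * k * (j / k) + ((c : ℕ) - 2 * k * (j / k)) = c := by omega
        have := congrFun (congrFun e4 ⟨j, hj⟩) ⟨(c : ℕ) - 2 * k * (j / k), by omega⟩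
        simp only [hc', c.2, dif_pos, Fin.eta] at this
        have b1 := abs_le.mp (hF b j hj c)
        have b2 := abs_le.mp (hF b' j hj c)
        have := ofNat_injC (by omega) (by omega) this
        omega
      · rw [hF0 b j hj c hc, hF0 b' j hj c hc]
    have hrev : ∀ i : Fin n, (∃ τ < h, π b τ = i + 1) ↔ (∃ τ < h, π b' τ = i + 1) := by
      intro i
      constructor
      · rintro ⟨τ, hτ, e⟩; exact ⟨τ, hτ, by rw [← f3 τ hτ, e]⟩
      · rintro ⟨τ, hτ, e⟩; exact ⟨τ, hτ, by rw [f3 τ hτ, e]⟩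
    have hmod : ∀ i (c : Fin d), y (b, s) i c % B = y (b', s') i c % B := by
      intro i c
      have := congrFun (congrFun e6 i) c
      have b1 := Int.emod_nonneg (y (b, s) i c) hBz.ne'
      have b2 := Int.emod_nonneg (y (b', s') i c) hBz.ne'
      have b3 := Int.emod_lt_of_pos (y (b, s) i c) hBz
      have b4 := Int.emod_lt_of_pos (y (b', s') i c) hBz
      have := ofNat_injC (by omega) (by omega) this
      omega
    have hoff : ∀ b (s : Fin n → Fin k → Fin 1024) i (c : Fin d),
        ¬ (2 * k * p b ≤ (c : ℕ) ∧ (c : ℕ) < 2 * k * p b + 2 * k) →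
        y (b, s) i c = (b i c : ℕ) := by
      intro b s i c hc
      have hz : ∑ l : Fin k, ((s i l : ℕ) : ℤ) * F b (p b * k + l) c = 0 := by
        apply Finset.sum_eq_zero
        intro l _
        rw [hF0 b _ (hidx b l) c, mul_zero]
        have : (p b * k + (l : ℕ)) / k = p b := by
          rw [mul_comm, Nat.mul_add_div hk, Nat.div_eq_of_lt l.2, add_zero]
        rw [this]
        exact hc
      simp only [y, c.2, dif_pos, Fin.eta, hz, add_zero, ite_self]
    have hy : ∀ i (c : Fin d), y (b, s) i c = y (b', s') i c := by
      intro i c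
      by_cases hc : 2 * k * p b ≤ (c : ℕ) ∧ (c : ℕ) < 2 * k * p b + 2 * k
      · have hc' : 2 * k * p b + ((c : ℕ) - 2 * k * p b) = c := by omega
        have := congrFun (congrFun e7 i) ⟨(c : ℕ) - 2 * k * p b, by omega⟩
        simp only [← f1, hc'] at this
        have g : ∀ bs : (Fin n → Fin d → Fin B) × (Fin n → Fin k → Fin 1024),
            -1 ≤ y bs i c / B ∧ y bs i c / B < 2 := by
          intro bs
          have := hyb bs i c
          constructor
          · rw [Int.le_ediv_iff_mul_le hBz]; linarith
          · rw [Int.ediv_lt_iff_lt_mul hBz]; linarith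
        have g1 := g (b, s)
        have g2 := g (b', s')
        have h3 := ofNat_injC (by omega) (by omega) this
        have h4 : y (b, s) i c / B = y (b', s') i c / B := by omega
        rw [← Int.mul_ediv_add_emod (y (b, s) i c) B, ← Int.mul_ediv_add_emod (y (b', s') i c) B, h4,
          hmod]
      · have h1 := hoff b s i c hc
        have h2 := hoff b' s' i c (by rw [← f1]; exact hc)
        have h3 := hmod i c
        rw [h1, h2, Int.emod_eq_of_lt (by positivity) (by exact_mod_cast (b i c).2),
          Int.emod_eq_of_lt (by positivity) (by exact_mod_cast (b' i c).2)] at h3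
        rw [h1, h2, h3]
    have := hinj b b' s s' f1 e2 f3 f5 f4 ?_ ?_
    · rw [this.1, this.2]
    · intro i hi
      have hi' := (hrev i).mp hi
      constructor
      · funext c
        have := hy i c
        simp only [y, c.2, dif_pos, if_pos hi, if_pos hi', Fin.eta] at this
        apply Fin.ext
        exact_mod_cast this
      · obtain ⟨τ, hτ, e⟩ := hi
        funext l
        have h8 := congrFun (congrFun e8 ⟨τ, hτ⟩) l
        have e' : π b' τ = i + 1 := by rw [← f3 τ hτ, e]
        simpa only [e, e', Nat.add_sub_cancel, i.2, dif_pos, Fin.eta] using h8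
    · intro i hi c
      have hi' := fun hx => hi ((hrev i).mpr hx)
      have := hy i c
      simp only [y, c.2, dif_pos, if_neg hi, if_neg hi', Fin.eta] at this
      rw [this]
      congr 1
      apply Finset.sum_congr rfl
      intro l _
      rw [← f1, f4 _ (hidx b l) c]
  have hcard := Fintype.card_le_of_injective Φ hΦ
  simp only [Fintype.card_prod, Fintype.card_pi, Fintype.card_fin, Fintype.card_bool,
    Finset.prod_const, Finset.card_univ, ← pow_mul] at hcard
  exact hcard

lemma coord_leC {d : ℕ} {w : EuclideanSpace ℝ (Fin d)} (hw : ‖w‖ = 1) (c : Fin d) :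
    |⌊(8 * (d : ℝ) ^ 2) * w c⌋| ≤ ((8 * d ^ 2 : ℕ) : ℤ) := by
  have h1 : |w c| ≤ 1 := by
    have := PiLp.norm_apply_le w c
    rwa [hw, Real.norm_eq_abs] at this
  have h2 := abs_le.mp h1
  have h3 : (0 : ℝ) ≤ 8 * (d : ℝ) ^ 2 := by positivity
  rw [abs_le]
  constructor
  · rw [Int.le_floor]
    push_cast
    nlinarith
  · have : ⌊(8 * (d : ℝ) ^ 2) * w c⌋ ≤ ⌊(((8 * d ^ 2 : ℕ) : ℤ) : ℝ)⌋ := by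
      apply Int.floor_le_floor
      push_cast
      nlinarith
    rwa [Int.floor_intCast] at this

lemma count_applyC {d M : ℕ}
    {alg : MemAlg M (EuclideanSpace ℝ (Fin d)) (Option (EuclideanSpace ℝ (Fin d)))}
    {n k P T h : ℕ}
    (hN : 2 * (P * k) + n ≤ d) (hd : 2 ≤ d) (hk : 0 < k) (hkd : 2048 * k ≤ d) (hP : 2 ≤ P)
    (hh : 0 < h) (hT : T ≤ (P - 1) * h)
    (hsol : SolvesFeasibility d alg T (1 / (48 * (d : ℝ) ^ 2 * Real.sqrt d))) :
    1024 ^ (k * n) ≤ P * 2 ^ M * (n + P * k + 2) ^ h *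
      (16 * d ^ 2 + 1) ^ (2 * k * (P * k)) *
      h ^ (k + 1) * 9 ^ (k * n) * 1024 ^ (k * h) := by
  classical
  obtain ⟨B, hB⟩ : ∃ B, B = 8 * d ^ 2 * (k * 1024) := ⟨_, rfl⟩
  have hB0 : 0 < B := by rw [hB]; positivity
  let bx : (Fin n → Fin d → Fin B) → ℕ → Fin d → ℕ :=
    fun b i c => if hi : i < n then b ⟨i, hi⟩ c else 0
  have hbx : ∀ b, ∀ i < n, ∀ c, bx b i c < B := by
    intro b i hi c
    simp only [bx, hi, dif_pos]
    exact (b ⟨i, hi⟩ c).2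
  have hst : ∀ b, ∃ w t, StageC alg n k T (P * k) (fun i => rowC (P * k) B (bx b i) i) w t :=
    fun b => stageC_exists (hbx b) hN hd hk hsol
  choose w t hst using hst
  have hgap : ∀ b, ∃ p, p + 1 < P ∧ t b (p * k + k) < t b (p * k) + h := fun b =>
    gapC rfl hP hk hh hT (t b) (hst b).time
  choose p hp hgap using hgap
  let O := fun b => oracC n (etaC d) (sigC d) (fun i => rowC (P * k) B (bx b i) i)
      (fun i => roundC (w b i)) (n + 1 + P * k)
  have hpk : ∀ b, p b * k + k < P * k := by
    intro b
    have h1 : (p b + 1) * k < P * k := Nat.mul_lt_mul_of_pos_right (hp b) hk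
    have h2 : (p b + 1) * k = p b * k + k := by ring
    omega
  have key := countC (n := n) (d := d) (k := k) (P := P) (h := h) (B := B) (H := 8 * d ^ 2)
    (J := n + 1 + P * k) (M := M) hk (by omega) hh (by positivity) hB
    p (fun b => by have := hp b; omega)
    (fun b => alg.mem (O b) (t b (p b * k)))
    (fun b τ => ptrC n (etaC d) (sigC d) (fun i => rowC (P * k) B (bx b i) i)
        (fun i => roundC (w b i)) (n + 1 + P * k) (alg.query (alg.mem (O b) (t b (p b * k) + τ))))
    (fun b τ => ptrC_le _)
    (fun b j c => ⌊(8 * (d : ℝ) ^ 2) * w b j c⌋)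
    (fun b j hj c => coord_leC ((hst b).unit j hj) c)
    (fun b j hj c hc => by
      have : w b j c = 0 := by
        by_contra h0
        exact hc ((hst b).supp j hj c h0)
      simp [this])
    (fun b l => t b (p b * k + l) - t b (p b * k))
    (fun b l hl => by
      have h1 := hgap b
      have h2 := hpk b
      rcases hl.lt_or_eq with h3 | h3
      · have := (hst b).mono (p b * k + l) (p b * k + k) (by omega) h2
        omega
      · subst h3; omega)
    (by
      intro b b' s s' e1 e2 e3 e5 e4 hrev hunrev
      let sx : (Fin n → Fin k → Fin 1024) → ℕ → ℕ → ℕ :=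
        fun s i l => if hi : i < n then (if hl : l < k then s ⟨i, hi⟩ ⟨l, hl⟩ else 0) else 0
      have hsx : ∀ s i l, sx s i l < 1024 := by
        intro s i l
        simp only [sx]
        split_ifs
        · exact Fin.is_lt _
        · norm_num
        · norm_num
      have hgap' := hgap b'
      have hsum : ∀ (s : Fin n → Fin k → Fin 1024) (i : ℕ) (hi : i < n) (c : Fin d),
          ∑ l ∈ Finset.range k, (sx s i l : ℤ) * ⌊(8 * (d : ℝ) ^ 2) * w b (p b * k + l) c⌋ =
          ∑ l : Fin k, ((s ⟨i, hi⟩ l : ℕ) : ℤ) * ⌊(8 * (d : ℝ) ^ 2) * w b (p b * k + l) c⌋ := by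
        intro s i hi c
        rw [← Fin.sum_univ_eq_sum_range
          (fun l => (sx s i l : ℤ) * ⌊(8 * (d : ℝ) ^ 2) * w b (p b * k + l) c⌋) k]
        apply Finset.sum_congr rfl
        intro l _
        simp only [sx, hi, l.2, dif_pos, Fin.eta]
      have main := injC (alg := alg) (T := T) (h := h) hB (b := bx b) (b' := bx b') hN hd hk hkd
        (O := O b) (O' := O b') rfl rfl (hst b) (hst b') (hp b) (hgap b) e4
        (by rw [e2, e1]) (by rw [← e1] at e3; exact e3) (by rw [← e1] at e5; exact e5)
        (s := sx s) (s' := sx s') (hsx s) (hsx s')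
        (by
          intro i hi hex
          obtain ⟨r1, r2⟩ := hrev ⟨i, hi⟩ hex
          constructor
          · intro c
            simp only [bx, hi, dif_pos]
            rw [r1]
          · intro l hl
            simp only [sx, hi, hl, dif_pos]
            rw [r2])
        (by
          intro i hi hex c
          have := hunrev ⟨i, hi⟩ hex c
          rw [hsum s i hi c, hsum s' i hi c]
          simp only [bx, hi, dif_pos]
          exact this)
      constructor
      · funext i c
        have := (main i i.2).1 c
        simp only [bx, i.2, dif_pos, Fin.eta] at this
        exact Fin.ext this
      · funext i l
        have := (main i i.2).2 l l.2
        simp only [sx, i.2, l.2, dif_pos, Fin.eta] at this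
        exact Fin.ext this)
  have hpos : 0 < B ^ (d * n) := by positivity
  have e9 : 3 ^ (2 * k * n) = 9 ^ (k * n) := by
    rw [mul_assoc, pow_mul]; norm_num
  rw [e9] at key
  apply Nat.le_of_mul_le_mul_left _ hpos
  calc _ ≤ _ := key
    _ = _ := by
      rw [show n + 1 + P * k + 1 = n + P * k + 2 by ring, show 2 * (8 * d ^ 2) + 1 = 16 * d ^ 2 + 1 by ring]
      ring

lemma bitsC {d n k P h M L : ℕ} (hdL : d ≤ 2 ^ L) (hd : 2 ≤ d) (hL : 1 ≤ L)
    (hN : 2 * (P * k) + n ≤ d) (hP : 2 ≤ P) (hk : 0 < k) (hn : 2 ≤ n) (hh : h = n / 2)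
    (hM : 4 * M ≤ k * n) (hkL : 2 * L ≤ k) (hnL : 24 * L ≤ n) (hPn : 112 * L * (P * k) ≤ n)
    (hkey : 1024 ^ (k * n) ≤ P * 2 ^ M * (n + P * k + 2) ^ h *
      (16 * d ^ 2 + 1) ^ (2 * k * (P * k)) *
      h ^ (k + 1) * 9 ^ (k * n) * 1024 ^ (k * h)) : False := by
  have hPk : P ≤ P * k := Nat.le_mul_of_pos_right _ hk
  have hle : P * 2 ^ M * (n + P * k + 2) ^ h *
      (16 * d ^ 2 + 1) ^ (2 * k * (P * k)) *
      h ^ (k + 1) * 9 ^ (k * n) * 1024 ^ (k * h) ≤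
      2 ^ L * 2 ^ M * (2 ^ L) ^ h * (2 ^ (2 * L + 5)) ^ (2 * k * (P * k)) *
      (2 ^ L) ^ (k + 1) * (2 ^ 4) ^ (k * n) * (2 ^ 10) ^ (k * h) := by
    have e1 : 16 * d ^ 2 + 1 ≤ 2 ^ (2 * L + 5) := by
      have : d ^ 2 ≤ (2 ^ L) ^ 2 := Nat.pow_le_pow_left hdL 2
      rw [← pow_mul] at this
      have h2 : 2 ^ (2 * L + 5) = 32 * 2 ^ (L * 2) := by rw [pow_add, mul_comm 2 L]; ring
      have : 1 ≤ d ^ 2 := Nat.one_le_pow _ _ (by omega)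
      omega
    have e2 : P ≤ 2 ^ L := by omega
    have e3 : n + P * k + 2 ≤ 2 ^ L := by omega
    have e4 : h ≤ 2 ^ L := by omega
    gcongr <;> norm_num
  have := hkey.trans hle
  rw [show 1024 = 2 ^ 10 by norm_num] at this
  simp only [← pow_mul, ← pow_add] at this
  have h2 := (Nat.pow_le_pow_iff_right (by norm_num)).mp this
  have a1 : 2 * (k * h) ≤ k * n := by
    have : 2 * h ≤ n := by omega
    nlinarith
  have a2 : 4 * (L * h) ≤ k * n := by
    have : 2 * h ≤ n := by omega
    nlinarith
  have a3 : 8 * (L * k) + 16 * L ≤ k * n := by nlinarith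
  have a4 : 8 * ((2 * L + 5) * (2 * k * (P * k))) ≤ k * n := by
    have : (2 * L + 5) * (P * k) ≤ 7 * L * (P * k) := Nat.mul_le_mul_right _ (by omega)
    nlinarith
  have a5 : 0 < k * n := by positivity
  have a6 : L * (k + 1) = L * k + L := by ring
  omega

lemma pow_clogC {L : ℕ} (hL : 12 ≤ L) : 72 * L ≤ 2 ^ (L - 1) := by
  induction L, hL using Nat.le_induction with
  | base => norm_num
  | succ L hL ih =>
    have : 2 ^ (L + 1 - 1) = 2 * 2 ^ (L - 1) := by
      rw [← pow_succ']; congr 1; omega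
    omega

lemma clog_le_logC {d : ℕ} (hd : 4096 ≤ d) : (Nat.clog 2 d : ℝ) ≤ 3 * Real.log d ∧
    1 ≤ Real.log d ∧ 12 ≤ Nat.clog 2 d ∧ 72 * Nat.clog 2 d ≤ d ∧ d ≤ 2 ^ Nat.clog 2 d := by
  have h1 : d ≤ 2 ^ Nat.clog 2 d := Nat.le_pow_clog (by norm_num) d
  have h2 : 2 ^ (Nat.clog 2 d - 1) < d := Nat.pow_pred_clog_lt_self (by norm_num) (by omega)
  have h3 : 12 ≤ Nat.clog 2 d := by
    by_contra hcon
    have : 2 ^ Nat.clog 2 d ≤ 2 ^ 11 := Nat.pow_le_pow_right (by norm_num) (by omega)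
    norm_num at this
    omega
  have h4 := pow_clogC h3
  have hd0 : (0 : ℝ) < d := by exact_mod_cast (by omega : 0 < d)
  have h5 : 1 ≤ Real.log d := by
    rw [Real.le_log_iff_exp_le hd0]
    have : (4096 : ℝ) ≤ d := by exact_mod_cast hd
    linarith [Real.exp_one_lt_d9]
  refine ⟨?_, h5, h3, by omega, h1⟩
  have h6 : Real.log ((2 : ℝ) ^ (Nat.clog 2 d - 1)) ≤ Real.log d := by
    apply Real.log_le_log (by positivity)
    exact_mod_cast h2.le
  rw [Real.log_pow, Nat.cast_sub (by omega)] at h6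
  push_cast at h6
  have h7 := Real.log_two_gt_d9
  have h8 : (12 : ℝ) ≤ Nat.clog 2 d := by exact_mod_cast h3
  nlinarith

set_option maxHeartbeats 1000000 in
/-- To solve the feasibility problem over the unit ball with accuracy `1/(48 d² √d)`,
any deterministic algorithm either uses at least `d^{2-δ}` bits of memory or makes
at least `Ω(d^{1+δ} / (log d)³)` queries. -/
theorem feasibility_memory_query_tradeoff :
    ∃ c : ℝ, 0 < c ∧ ∃ d₀ : ℕ, ∀ d : ℕ, d₀ ≤ d → ∀ δ : ℝ, 0 ≤ δ → δ ≤ 1 →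
      ∀ M T : ℕ,
        ∀ alg : MemAlg M (EuclideanSpace ℝ (Fin d)) (Option (EuclideanSpace ℝ (Fin d))),
          SolvesFeasibility d alg T (1 / (48 * (d : ℝ) ^ 2 * Real.sqrt d)) →
            (d : ℝ) ^ ((2 : ℝ) - δ) ≤ (M : ℝ) ∨
              c * (d : ℝ) ^ ((1 : ℝ) + δ) / Real.log d ^ 3 ≤ (T : ℝ) := by
  refine ⟨1 / 2000000, by norm_num, 4096, ?_⟩
  intro d hd δ hδ0 hδ1 M T alg hsol
  by_cases hM : (d : ℝ) ^ ((2 : ℝ) - δ) ≤ (M : ℝ)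
  · exact Or.inl hM
  right
  push Not at hM
  obtain ⟨hLl, hl, hL12, hLd, hdL⟩ := clog_le_logC hd
  obtain ⟨L, hLdef⟩ : ∃ L, L = Nat.clog 2 d := ⟨_, rfl⟩
  obtain ⟨ℓ, hℓdef⟩ : ∃ ℓ, ℓ = Real.log d := ⟨_, rfl⟩
  rw [← hLdef] at hLl hL12 hLd hdL
  rw [← hℓdef] at hLl hl ⊢
  have hdR : (4096 : ℝ) ≤ d := by exact_mod_cast hd
  have hd0 : (0 : ℝ) < d := by linarith
  obtain ⟨x, hx⟩ : ∃ x, x = (d : ℝ) ^ ((1 : ℝ) - δ) := ⟨_, rfl⟩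
  obtain ⟨z, hz⟩ : ∃ z, z = (d : ℝ) ^ ((1 : ℝ) + δ) := ⟨_, rfl⟩
  have hx1 : 1 ≤ x := by
    rw [hx]; exact Real.one_le_rpow (by linarith) (by linarith)
  have hz0 : 0 < z := by rw [hz]; positivity
  have hzx : z * x = (d : ℝ) ^ 2 := by
    rw [hx, hz, ← Real.rpow_add hd0]
    rw [show (1 : ℝ) + δ + (1 - δ) = ((2 : ℕ) : ℝ) by push_cast; ring, Real.rpow_natCast]
  have hMx : (M : ℝ) < d * x := by
    have : (d : ℝ) ^ ((2 : ℝ) - δ) = d * x := by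
      rw [hx, show (2 : ℝ) - δ = 1 + (1 - δ) by ring, Real.rpow_add hd0, Real.rpow_one]
    linarith
  rw [← hz]
  obtain ⟨n, hn⟩ : ∃ n, n = d / 2 := ⟨_, rfl⟩
  obtain ⟨X, hX⟩ : ∃ X, X = ⌈x⌉₊ := ⟨_, rfl⟩
  have hX1 : x ≤ X := by rw [hX]; exact Nat.le_ceil x
  have hX2 : (X : ℝ) ≤ 2 * x := by
    have := Nat.ceil_lt_add_one (by linarith : 0 ≤ x)
    rw [← hX] at this
    linarith
  have hX0 : 1 ≤ X := by
    have : (1 : ℝ) ≤ X := by linarith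
    exact_mod_cast this
  obtain ⟨k, hk⟩ : ∃ k, k = 12 * L * X := ⟨_, rfl⟩
  have hk12 : 12 * L ≤ k := by rw [hk]; exact Nat.le_mul_of_pos_right _ hX0
  have hk0 : 0 < k := by omega
  have hLR : (12 : ℝ) ≤ L := by exact_mod_cast hL12
  have hkR : (k : ℝ) ≤ 24 * L * x := by
    rw [hk]; push_cast; nlinarith
  have hkR2 : 12 * x ≤ (k : ℝ) := by
    rw [hk]; push_cast; nlinarith
  have hnR : (d : ℝ) ≤ 3 * n := by
    have : d ≤ 3 * n := by omega
    exact_mod_cast this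
  have hM4 : 4 * M ≤ k * n := by
    have : 4 * (M : ℝ) ≤ k * n := by nlinarith
    exact_mod_cast this
  have hL2 : (L : ℝ) ^ 2 ≤ 9 * ℓ ^ 2 := by nlinarith
  have hfin : ∀ K : ℝ, 0 ≤ K → K ≤ 222222 → z ≤ K * L ^ 2 * T → 1 / 2000000 * z / ℓ ^ 3 ≤ T := by
    intro K hK0 hK hzT
    rw [div_le_iff₀ (by positivity)]
    have hT0 : (0 : ℝ) ≤ T := Nat.cast_nonneg T
    have h1 : K * L ^ 2 * T ≤ 222222 * (9 * ℓ ^ 2) * T := by gcongr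
    have h2 : ℓ ^ 2 * T ≤ ℓ ^ 3 * T := by
      gcongr
      norm_num
    linarith
  obtain ⟨P, hP⟩ : ∃ P, P = n / (112 * L * k) := ⟨_, rfl⟩
  have hden : 0 < 112 * L * k := by positivity
  have hPle : P * (112 * L * k) ≤ n := by rw [hP]; exact Nat.div_mul_le_self _ _
  have hPlt : n < (P + 1) * (112 * L * k) := by
    rw [hP, mul_comm]; exact Nat.lt_mul_div_succ n hden
  have hPltR : (n : ℝ) ≤ (P + 1) * (112 * L * k) := by exact_mod_cast hPlt.le
  have hPle' : 112 * L * (P * k) ≤ n := by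
    calc _ = P * (112 * L * k) := by ring
      _ ≤ n := hPle
  have hnT : (n : ℝ) ≤ T := by
    exact_mod_cast linear_boundC (N := n) (by omega) (by omega) hsol
  by_cases hP2 : 2 ≤ P
  · have hPk : P * k ≤ n := by
      refine le_trans ?_ hPle'
      exact Nat.le_mul_of_pos_left _ (by omega)
    have hPk1 : 2 * (P * k) ≤ n := by
      refine le_trans ?_ hPle'
      exact Nat.mul_le_mul_right _ (by omega)
    have hkd : 2048 * k ≤ d := by
      have h1 : 2 * k ≤ P * k := Nat.mul_le_mul_right _ hP2
      have h2 : 1344 * (P * k) ≤ 112 * L * (P * k) := Nat.mul_le_mul_right _ (by omega)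
      omega
    have hTgt : (P - 1) * (n / 2) < T := by
      by_contra hcon
      push Not at hcon
      have key := count_applyC (alg := alg) (n := n) (k := k) (P := P) (T := T) (h := n / 2)
        (by omega) (by omega) hk0 hkd hP2 (by omega) hcon hsol
      exact bitsC (n := n) (h := n / 2) hdL (by omega) (by omega) (by omega) hP2 hk0 (by omega) rfl hM4 (by omega)
        (by omega) hPle' key
    have hTR : ((P + 1 : ℕ) : ℝ) * n ≤ 9 * T := by
      have h1 : (P + 1) ≤ 3 * (P - 1) := by omega
      have h2 : n ≤ 3 * (n / 2) := by omega
      have : (P + 1) * n ≤ (3 * (P - 1)) * (3 * (n / 2)) := Nat.mul_le_mul h1 h2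
      have h3 : (P + 1) * n ≤ 9 * T := by nlinarith
      exact_mod_cast h3
    push_cast at hTR
    apply hfin 217728 (by norm_num) (by norm_num)
    have h1 : (d : ℝ) ^ 2 ≤ 9 * (n * n) := by nlinarith
    have h2 : (n : ℝ) * n ≤ ((P + 1) * n) * (112 * L * k) := by
      have := mul_le_mul_of_nonneg_right hPltR (Nat.cast_nonneg n)
      linarith
    have h3 : ((P + 1) * n : ℝ) * (112 * L * k) ≤ (9 * T) * (112 * L * (24 * L * x)) := by
      gcongr
    have h4 : z * x ≤ (217728 * L ^ 2 * T) * x := by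
      rw [hzx]
      linarith
    exact le_of_mul_le_mul_right h4 (by linarith)
  · have hP1 : (P : ℝ) + 1 ≤ 2 := by
      have : P + 1 ≤ 2 := by omega
      exact_mod_cast this
    apply hfin 48384 (by norm_num) (by norm_num)
    have h1 : (n : ℝ) ≤ 2 * (112 * L * (24 * L * x)) := by
      refine hPltR.trans ?_
      gcongr
    have h2 : (d : ℝ) ≤ 16128 * L ^ 2 * x := by linarith
    have h3 : (d : ℝ) ≤ 3 * T := by linarith
    have h4 : z * x ≤ (48384 * L ^ 2 * T) * x := by
      rw [hzx]
      have : (d : ℝ) * d ≤ (16128 * L ^ 2 * x) * (3 * T) := by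
        gcongr
      linarith
    exact le_of_mul_le_mul_right h4 (by linarith)
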